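/- Let Φ be a Young function such that Φ and its conjugate Φ̃ are of class Δ₂, assume ℳ is countably generated modulo μ-null sets, let {T(x)}_{x∈ℝ^N} be an N-dimensional dynamical system on Ω, and let (ε_k) ⊆ (0,1] with ε_k → 0. Let (u_k) be measurable functions on Q×Ω with sup_k ‖u_k‖_{Φ,Q×Ω} < ∞ which weakly stochastically 2-scale converge to u₀, and assume each u_k admits a weak x-gradient Du_k : Q×Ω → ℝ^N (i.e. ∫_{Q×Ω} u_k (∂φ/∂x_i) ψ dx dμ = −∫_{Q×Ω} (Du_k)_i φ ψ dx dμ for all φ ∈ C_c^∞(Q), all bounded measurable ψ : Ω → ℝ, 1 ≤ i ≤ N) with sup_k ‖|Du_k|‖_{Φ,Q×Ω} < ∞, and that the components of Du_k weakly stochastically 2-scale converge to the components of a measurable V : Q×Ω×ℝ^N → ℝ^N, ℤ^N-periodic in the last variable, with ‖|V|‖_{Φ,Q×Ω×Y} < ∞. Then there exists a measurable u₂ : Q×Ω×ℝ^N → ℝ, ℤ^N-periodic in its last variable, with ‖u₂‖_{Φ,Q×Ω×Y} < ∞, ∫_Y u₂(x,ω,y) dy = 0 for a.e. (x,ω), and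 such that for a.e. (x,ω) ∈ Q×Ω the function u₂(x,ω,·) has weak gradient V(x,ω,·) − ∫_Y V(x,ω,z) dz on the torus: ∫_Y u₂(x,ω,y)(∂g/∂y_i)(y) dy = −∫_Y (V_i(x,ω,y) − ∫_Y V_i(x,ω,z) dz) g(y) dy for every ℤ^N-periodic g ∈ C^∞(ℝ^N) and 1 ≤ i ≤ N. -/

import Mathlib

open MeasureTheory Filter Topology ENNReal

noncomputable section

/-- Euclidean norm on `Fin N → ℝ`. -/
def enorm2 {N : ℕ} (v : Fin N → ℝ) : ℝ := Real.sqrt (∑ i, v i ^ 2)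

/-- `Φ : [0,∞) → [0,∞)` is a Young function: continuous, convex, positive on `(0,∞)`,
with `Φ(t)/t → 0` as `t → 0⁺` and `Φ(t)/t → ∞` as `t → ∞` (so `Φ(0) = 0`). -/
def IsYoung (Φ : ℝ → ℝ) : Prop :=
  ContinuousOn Φ (Set.Ici 0) ∧ ConvexOn ℝ (Set.Ici 0) Φ ∧ Φ 0 = 0 ∧
    (∀ t : ℝ, 0 < t → 0 < Φ t) ∧ (∀ t : ℝ, 0 ≤ t → 0 ≤ Φ t) ∧
    Tendsto (fun t => Φ t / t) (nhdsWithin 0 (Set.Ioi 0)) (nhds 0) ∧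
    Tendsto (fun t => Φ t / t) atTop atTop

/-- The `Δ₂`-condition (at infinity). -/
def Delta2 (Φ : ℝ → ℝ) : Prop :=
  ∃ α : ℝ, 0 < α ∧ ∃ t₀ : ℝ, 0 ≤ t₀ ∧ ∀ t : ℝ, t₀ ≤ t → Φ (2 * t) ≤ α * Φ t

/-- The `Δ'`-condition (at infinity). -/
def DeltaPrime (Φ : ℝ → ℝ) : Prop :=
  ∃ k : ℝ, 0 < k ∧ ∃ t₀ s₀ : ℝ, 0 ≤ t₀ ∧ 0 ≤ s₀ ∧
    ∀ t s : ℝ, t₀ ≤ t → s₀ ≤ s → Φ (t * s) ≤ k * Φ t * Φ s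

/-- The conjugate Young function `Φ̃(t) = sup_{s ≥ 0} (st − Φ(s))`. -/
def conjY (Φ : ℝ → ℝ) (t : ℝ) : ℝ := sSup ((fun s => s * t - Φ s) '' Set.Ici 0)

/-- The Luxemburg norm `‖u‖_{Φ,X} = inf {δ > 0 : ∫_X Φ(|u|/δ) dν ≤ 1}` (`+∞` if no such `δ`). -/
def luxNorm {X : Type*} [MeasurableSpace X] (Φ : ℝ → ℝ) (ν : Measure X) (u : X → ℝ) : ℝ≥0∞ :=
  sInf {d : ℝ≥0∞ | ∃ δ : ℝ, 0 < δ ∧ d = ENNReal.ofReal δ ∧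
    (∫⁻ x, ENNReal.ofReal (Φ (|u x| / δ)) ∂ν) ≤ 1}

/-- An `N`-dimensional dynamical system on `Ω` preserving `μ`. -/
def IsDynSys {N : ℕ} {Ω : Type*} [MeasurableSpace Ω] (μ : Measure Ω)
    (T : (Fin N → ℝ) → Ω → Ω) : Prop :=
  T 0 = id ∧ (∀ x y : Fin N → ℝ, T (x + y) = T x ∘ T y) ∧
    (∀ x : Fin N → ℝ, MeasurePreserving (T x) μ μ) ∧
    Measurable fun p : (Fin N → ℝ) × Ω => T p.1 p.2

/-- `ℤ^N`-periodicity. -/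
def ZPeriodic {N : ℕ} (g : (Fin N → ℝ) → ℝ) : Prop :=
  ∀ (y : Fin N → ℝ) (k : Fin N → ℤ), g (y + fun i => (k i : ℝ)) = g y

/-- The unit cube `Y = [0,1]^N`. -/
def Ycube (N : ℕ) : Set (Fin N → ℝ) := Set.Icc 0 1

/-- `ℳ` is countably generated modulo `μ`-null sets. -/
def CountGenModNull {Ω : Type*} [MeasurableSpace Ω] (μ : Measure Ω) : Prop :=
  ∃ S : ℕ → Set Ω, (∀ n, MeasurableSet (S n)) ∧
    ∀ A : Set Ω, MeasurableSet A →
      ∃ B : Set Ω, MeasurableSet[MeasurableSpace.generateFrom (Set.range S)] B ∧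
        μ (symmDiff A B) = 0

/-- Weak stochastic two-scale convergence of `(u k)` to `u₀` along the sequence `(ε k)`. -/
def WeakStoch2Scale {N : ℕ} {Ω : Type*} [MeasurableSpace Ω] (μ : Measure Ω)
    (T : (Fin N → ℝ) → Ω → Ω) (Q : Set (Fin N → ℝ)) (ε : ℕ → ℝ)
    (u : ℕ → (Fin N → ℝ) → Ω → ℝ) (u₀ : (Fin N → ℝ) → Ω → (Fin N → ℝ) → ℝ) : Prop :=
  ∀ φ : (Fin N → ℝ) → ℝ, ContDiff ℝ (⊤ : ℕ∞) φ → HasCompactSupport φ → tsupport φ ⊆ Q →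
    ∀ ψ : Ω → ℝ, Measurable ψ → (∃ C : ℝ, ∀ ω, |ψ ω| ≤ C) →
      ∀ g : (Fin N → ℝ) → ℝ, Continuous g → ZPeriodic g →
        Tendsto
          (fun k => ∫ x in Q, (∫ ω, u k x ω * φ x * ψ (T ((ε k)⁻¹ • x) ω) *
              g (((ε k) ^ 2)⁻¹ • x) ∂μ))
          atTop
          (nhds (∫ x in Q, (∫ ω, (∫ y in Ycube N, u₀ x ω y * φ x * ψ ω * g y) ∂μ)))

lemma zper_of_span {N : ℕ} {β : Type*} (f : (Fin N → ℝ) → β)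
    (hf : ∀ (y : Fin N → ℝ) (k : Fin N → ℤ), f (y + fun i => (k i : ℝ)) = f y)
    (g : (Submodule.span ℤ (Set.range (Pi.basisFun ℝ (Fin N)))).toAddSubgroup)
    (x : Fin N → ℝ) : f (g +ᵥ x) = f x := by
  obtain ⟨g, hg⟩ := g
  have h2 : ∃ k : Fin N → ℤ, g = fun i => (k i : ℝ) := by
    have := ((Pi.basisFun ℝ (Fin N)).mem_span_iff_repr_mem ℤ g).1 hg
    choose k hk using this
    refine ⟨k, ?_⟩
    funext i
    have := hk i
    simp at this
    exact this.symm
  obtain ⟨k, rfl⟩ := h2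
  rw [← hf x k]
  congr 1
  rw [AddSubgroup.vadd_def]
  simp [add_comm]

lemma fd_ae {N : ℕ} : (ZSpan.fundamentalDomain (Pi.basisFun ℝ (Fin N))) =ᵐ[volume] Ycube N := by
  rw [ZSpan.fundamentalDomain_pi_basisFun]
  exact Measure.univ_pi_Ico_ae_eq_Icc

lemma per_lintegral_shift {N : ℕ} (f : (Fin N → ℝ) → ℝ≥0∞)
    (hf : ∀ (y : Fin N → ℝ) (k : Fin N → ℤ), f (y + fun i => (k i : ℝ)) = f y)
    (s : Fin N → ℝ) : ∫⁻ y in Ycube N, f (y + s) = ∫⁻ y in Ycube N, f y := by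
  have : Countable (Submodule.span ℤ (Set.range (Pi.basisFun ℝ (Fin N)))).toAddSubgroup :=
    inferInstanceAs (Countable (Submodule.span ℤ (Set.range (Pi.basisFun ℝ (Fin N)))))
  have h1 := ZSpan.isAddFundamentalDomain' (Pi.basisFun ℝ (Fin N)) volume
  have h2 := h1.vadd_of_comm (G' := Fin N → ℝ) s
  have e := h2.setLIntegral_eq h1 f (zper_of_span f hf)
  rw [← setLIntegral_congr (fd_ae (N := N)), ← setLIntegral_congr (fd_ae (N := N)), ← e]
  have := (measurePreserving_vadd s (volume : Measure (Fin N → ℝ))).setLIntegral_comp_emb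
    (measurableEmbedding_const_vadd s) f (ZSpan.fundamentalDomain (Pi.basisFun ℝ (Fin N)))
  rw [← Set.image_vadd, ← this]
  simp [add_comm]

lemma per_integral_shift {N : ℕ} (f : (Fin N → ℝ) → ℝ) (hf : ZPeriodic f)
    (s : Fin N → ℝ) : ∫ y in Ycube N, f (y + s) = ∫ y in Ycube N, f y := by
  have : Countable (Submodule.span ℤ (Set.range (Pi.basisFun ℝ (Fin N)))).toAddSubgroup :=
    inferInstanceAs (Countable (Submodule.span ℤ (Set.range (Pi.basisFun ℝ (Fin N)))))
  have h1 := ZSpan.isAddFundamentalDomain' (Pi.basisFun ℝ (Fin N)) volume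
  have h2 := h1.vadd_of_comm (G' := Fin N → ℝ) s
  have e := h2.setIntegral_eq h1 (zper_of_span f hf)
  rw [← setIntegral_congr_set (fd_ae (N := N)), ← setIntegral_congr_set (fd_ae (N := N)), ← e]
  have := (measurePreserving_vadd s (volume : Measure (Fin N → ℝ))).setIntegral_image_emb
    (measurableEmbedding_const_vadd s) f (ZSpan.fundamentalDomain (Pi.basisFun ℝ (Fin N)))
  rw [← Set.image_vadd, this]
  simp [add_comm]

instance ycube_prob {N : ℕ} : IsProbabilityMeasure (volume.restrict (Ycube N)) := by
  constructor
  simp [Ycube, Real.volume_Icc_pi]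

instance ycube_compact {N : ℕ} : CompactSpace (Ycube N) :=
  isCompact_iff_compactSpace.1 isCompact_Icc

instance i01_prob : IsProbabilityMeasure (volume.restrict (Set.Icc (0:ℝ) 1)) := by
  constructor
  simp

lemma young_cont {Φ : ℝ → ℝ} (hΦ : IsYoung Φ) : Continuous fun t : ℝ => Φ |t| :=
  hΦ.1.comp_continuous continuous_abs (fun x => abs_nonneg x)

lemma young_mono {Φ : ℝ → ℝ} (hΦ : IsYoung Φ) {s t : ℝ} (hs : 0 ≤ s) (hst : s ≤ t) :
    Φ s ≤ Φ t := by
  obtain ⟨-, hc, h0, hp, hnn, -, -⟩ := hΦ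
  rcases hs.eq_or_lt with rfl | hs
  · rw [h0]; exact hnn t hst
  have ht : 0 < t := hs.trans_le hst
  have := hc.2 (show (0:ℝ) ∈ Set.Ici 0 by simp) (show t ∈ Set.Ici 0 from ht.le)
    (show 0 ≤ 1 - s / t by rw [sub_nonneg]; exact (div_le_one ht).2 hst) (show 0 ≤ s / t by positivity) (by ring)
  simp only [smul_eq_mul, mul_zero, zero_add, h0] at this
  rw [div_mul_cancel₀ _ ht.ne'] at this
  refine this.trans ?_
  have h1 : s / t ≤ 1 := (div_le_one ht).2 hst
  nlinarith [hnn t ht.le]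

lemma young_lin {Φ : ℝ → ℝ} (hΦ : IsYoung Φ) : ∃ M : ℝ, 0 ≤ M ∧ ∀ t, 0 ≤ t → t ≤ M + Φ t := by
  obtain ⟨-, hc, h0, hp, hnn, -, ht⟩ := hΦ
  obtain ⟨M, hM⟩ := eventually_atTop.1 (ht.eventually_ge_atTop 1)
  refine ⟨max M 1, by positivity, fun t h => ?_⟩
  by_cases hMt : max M 1 ≤ t
  · have := hM t ((le_max_left _ _).trans hMt)
    have h1 : 0 < t := lt_of_lt_of_le one_pos ((le_max_right _ _).trans hMt)
    rw [one_le_div h1] at this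
    have : (0:ℝ) ≤ max M 1 := by positivity
    linarith
  · have := hnn t h
    push Not at hMt
    linarith

lemma young_integrable {X : Type*} [MeasurableSpace X] {ν : Measure X} [IsFiniteMeasure ν]
    {Φ : ℝ → ℝ} (hΦ : IsYoung Φ) {f : X → ℝ} (hf : Measurable f) (h0 : ∀ x, 0 ≤ f x)
    (h : ∫⁻ x, ENNReal.ofReal (Φ (f x)) ∂ν ≠ ⊤) :
    Integrable (fun x => Φ (f x)) ν ∧ Integrable f ν := by
  have hm : Measurable fun x => Φ (f x) := by
    have := (young_cont hΦ).measurable.comp hf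
    convert this using 2 with x
    simp [abs_of_nonneg (h0 x)]
  have h1 : Integrable (fun x => Φ (f x)) ν := by
    refine ⟨hm.aestronglyMeasurable, ?_⟩
    rw [hasFiniteIntegral_iff_ofReal (Eventually.of_forall fun x => hΦ.2.2.2.2.1 _ (h0 x))]
    exact h.lt_top
  refine ⟨h1, ?_⟩
  obtain ⟨M, hM, hl⟩ := young_lin hΦ
  refine Integrable.mono' ((integrable_const M).add h1) hf.aestronglyMeasurable ?_
  refine Eventually.of_forall fun x => ?_
  rw [Real.norm_of_nonneg (h0 x)]
  exact hl _ (h0 x)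

lemma young_jensen {X : Type*} [MeasurableSpace X] {ν : Measure X} [IsProbabilityMeasure ν]
    {Φ : ℝ → ℝ} (hΦ : IsYoung Φ) {f h : X → ℝ} (hf : Measurable f)
    (h0 : ∀ x, 0 ≤ f x) (hh : ∀ᵐ x ∂ν, |h x| ≤ f x) :
    ENNReal.ofReal (Φ |∫ x, h x ∂ν|) ≤ ∫⁻ x, ENNReal.ofReal (Φ (f x)) ∂ν := by
  by_cases hfin : ∫⁻ x, ENNReal.ofReal (Φ (f x)) ∂ν = ⊤
  · rw [hfin]; exact le_top
  obtain ⟨h1, h2⟩ := young_integrable hΦ hf h0 hfin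
  rw [← ofReal_integral_eq_lintegral_ofReal h1
    (Eventually.of_forall fun x => hΦ.2.2.2.2.1 _ (h0 x))]
  apply ENNReal.ofReal_le_ofReal
  have h3 : |∫ x, h x ∂ν| ≤ ∫ x, f x ∂ν := by
    rw [← Real.norm_eq_abs]
    exact norm_integral_le_of_norm_le h2 hh
  refine (young_mono hΦ (abs_nonneg _) h3).trans ?_
  exact hΦ.2.1.map_integral_le hΦ.1 isClosed_Ici (Eventually.of_forall h0) h2 h1

lemma lux_lt_top {X : Type*} [MeasurableSpace X] {ν : Measure X} {Φ : ℝ → ℝ} {f : X → ℝ}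
    (h : luxNorm Φ ν f < ⊤) :
    ∃ δ : ℝ, 0 < δ ∧ (∫⁻ x, ENNReal.ofReal (Φ (|f x| / δ)) ∂ν) ≤ 1 := by
  unfold luxNorm at h
  rw [sInf_lt_iff] at h
  obtain ⟨d, ⟨δ, h1, h2, h3⟩, -⟩ := h
  exact ⟨δ, h1, h3⟩

lemma lux_lt_top_of {X : Type*} [MeasurableSpace X] {ν : Measure X} {Φ : ℝ → ℝ} {f : X → ℝ}
    {δ : ℝ} (h0 : 0 < δ) (h : (∫⁻ x, ENNReal.ofReal (Φ (|f x| / δ)) ∂ν) ≤ 1) :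
    luxNorm Φ ν f < ⊤ := by
  unfold luxNorm
  rw [sInf_lt_iff]
  exact ⟨_, ⟨δ, h0, rfl, h⟩, ENNReal.ofReal_lt_top⟩

lemma lux_integrable {X : Type*} [MeasurableSpace X] {ν : Measure X} [IsFiniteMeasure ν]
    {Φ : ℝ → ℝ} (hΦ : IsYoung Φ) {f : X → ℝ} (hf : Measurable f)
    (h : luxNorm Φ ν f < ⊤) : Integrable f ν := by
  obtain ⟨δ, h0, h1⟩ := lux_lt_top h
  have := (young_integrable hΦ (f := fun x => |f x| / δ) (by fun_prop)
    (fun x => by positivity) (h1.trans_lt one_lt_top).ne).2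
  have := this.mul_const δ
  simp only [div_mul_cancel₀ _ h0.ne'] at this
  exact (integrable_norm_iff hf.aestronglyMeasurable).1 this

lemma abs_le_enorm2 {N : ℕ} (v : Fin N → ℝ) (i : Fin N) : |v i| ≤ enorm2 v := by
  unfold enorm2
  apply Real.abs_le_sqrt
  exact Finset.single_le_sum (f := fun i => v i ^ 2) (fun i _ => sq_nonneg _) (Finset.mem_univ i)

lemma enorm2_nonneg {N : ℕ} (v : Fin N → ℝ) : 0 ≤ enorm2 v := Real.sqrt_nonneg _

lemma enorm2_measurable {N : ℕ} : Measurable (enorm2 : (Fin N → ℝ) → ℝ) := by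
  unfold enorm2
  fun_prop

lemma lux_comp_integrable {X : Type*} [MeasurableSpace X] {ν : Measure X} [IsFiniteMeasure ν]
    {N : ℕ} {Φ : ℝ → ℝ} (hΦ : IsYoung Φ) {f : X → Fin N → ℝ} (hf : Measurable f)
    (h : luxNorm Φ ν (fun x => enorm2 (f x)) < ⊤) (i : Fin N) :
    Integrable (fun x => f x i) ν := by
  have := lux_integrable hΦ (enorm2_measurable.comp hf) h
  exact this.mono' (by fun_prop) (Eventually.of_forall fun x => abs_le_enorm2 _ _)

abbrev pd {N : ℕ} (i : Fin N) (g : (Fin N → ℝ) → ℝ) (y : Fin N → ℝ) : ℝ :=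
  fderiv ℝ g y (Pi.single i 1)

lemma pd_contDiff {N : ℕ} (i : Fin N) {g : (Fin N → ℝ) → ℝ} (hg : ContDiff ℝ (⊤ : ℕ∞) g) :
    ContDiff ℝ (⊤ : ℕ∞) (pd i g) := by
  have : ContDiff ℝ (⊤ : ℕ∞) (fderiv ℝ g) := hg.fderiv_right (by simp)
  exact this.clm_apply contDiff_const

lemma pd_per {N : ℕ} (i : Fin N) {g : (Fin N → ℝ) → ℝ} (hg : ZPeriodic g) :
    ZPeriodic (pd i g) := by
  intro y k
  have : (fun y => g (y + fun i => (k i : ℝ))) = g := funext fun y => hg y k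
  unfold pd
  rw [← fderiv_comp_add_right, this]

lemma pd_shift {N : ℕ} (i : Fin N) (g : (Fin N → ℝ) → ℝ) (s y : Fin N → ℝ) :
    pd i (fun y => g (y + s)) y = pd i g (y + s) := by
  unfold pd
  rw [fderiv_comp_add_right]

lemma fderiv_sum_pd {N : ℕ} (g : (Fin N → ℝ) → ℝ) (y a : Fin N → ℝ) :
    fderiv ℝ g y a = ∑ j, a j * pd j g y := by
  have h : a = ∑ j, a j • (Pi.single j 1 : Fin N → ℝ) := by
    ext i
    simp [Finset.sum_apply, Pi.single_apply]
  conv_lhs => rw [h]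
  simp [map_sum]

lemma per_bdd {N : ℕ} {f : (Fin N → ℝ) → ℝ} (hf : Continuous f) (hp : ZPeriodic f) :
    ∃ C : ℝ, 0 ≤ C ∧ ∀ y, |f y| ≤ C := by
  obtain ⟨C, hC⟩ := (isCompact_Icc (a := (0 : Fin N → ℝ)) (b := 1)).exists_bound_of_continuousOn
    hf.continuousOn
  refine ⟨max C 0, by positivity, fun y => ?_⟩
  have h := hp (fun i => Int.fract (y i)) (fun i => ⌊y i⌋)
  have h2 : ((fun i => Int.fract (y i)) + fun i => ((⌊y i⌋ : ℤ) : ℝ)) = y := by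
    ext i; simp [Int.fract_add_floor]
  rw [h2] at h
  rw [h]
  refine le_trans (hC _ ⟨fun i => ?_, fun i => ?_⟩) (le_max_left _ _)
  · exact Int.fract_nonneg _
  · exact (Int.fract_lt_one _).le

lemma pd_bdd {N : ℕ} (i : Fin N) {g : (Fin N → ℝ) → ℝ} (hg : ContDiff ℝ (⊤ : ℕ∞) g)
    (hp : ZPeriodic g) : ∃ C : ℝ, 0 ≤ C ∧ ∀ y, |pd i g y| ≤ C :=
  per_bdd (pd_contDiff i hg).continuous (pd_per i hp)

lemma ftc_line {N : ℕ} {g : (Fin N → ℝ) → ℝ} (hg : ContDiff ℝ (⊤ : ℕ∞) g) (y a : Fin N → ℝ) :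
    ∫ t in Set.Icc (0:ℝ) 1, ∑ j, a j * pd j g (y + t • a) = g (y + a) - g y := by
  rw [integral_Icc_eq_integral_Ioc, ← intervalIntegral.integral_of_le zero_le_one]
  rw [intervalIntegral.integral_eq_sub_of_hasDerivAt (f := fun t : ℝ => g (y + t • a))]
  · simp
  · intro t _
    rw [← fderiv_sum_pd]
    have h1 : HasFDerivAt g (fderiv ℝ g (y + t • a)) (y + t • a) :=
      (hg.differentiable (by simp) _).hasFDerivAt
    have h2 : HasDerivAt (fun t : ℝ => y + t • a) a t := by
      simpa using ((hasDerivAt_id t).smul_const a).const_add y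
    exact h1.comp_hasDerivAt t h2
  · apply Continuous.intervalIntegrable
    have : ∀ j, Continuous (pd j g) := fun j => (pd_contDiff j hg).continuous
    fun_prop

lemma per_int_pd {N : ℕ} (i : Fin N) {g : (Fin N → ℝ) → ℝ} (hg : ContDiff ℝ (⊤ : ℕ∞) g)
    (hp : ZPeriodic g) : ∫ y in Ycube N, pd i g y = 0 := by
  have hc : Continuous (pd i g) := (pd_contDiff i hg).continuous
  have hgi : Integrable g (volume.restrict (Ycube N)) :=
    hg.continuous.continuousOn.integrableOn_compact isCompact_Icc
  obtain ⟨C, hC0, hC⟩ := pd_bdd i hg hp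
  have h1 : ∫ t in Set.Icc (0:ℝ) 1, ∫ y in Ycube N, pd i g (y + t • (Pi.single i 1)) =
      ∫ y in Ycube N, pd i g y := by
    simp_rw [per_integral_shift _ (pd_per i hp)]
    simp
  rw [← h1, integral_integral_swap]
  · have h2 : ∀ y : Fin N → ℝ, ∫ t in Set.Icc (0:ℝ) 1, pd i g (y + t • (Pi.single i 1)) =
        g (y + Pi.single i 1) - g y := by
      intro y
      rw [← ftc_line hg]
      congr 1
      ext t
      rw [← fderiv_sum_pd]
    simp_rw [h2]
    have h3 : ∀ y, g (y + Pi.single i 1) = g y := by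
      intro y
      rw [← hp y (Pi.single i 1)]
      congr 2
      ext j
      by_cases h : j = i
      · subst h; simp
      · simp [h]
    simp [h3]
  · refine Integrable.of_bound (C := C) ?_ (Eventually.of_forall fun p => hC _)
    apply Continuous.aestronglyMeasurable
    unfold Function.uncurry
    fun_prop

def Rm (N : ℕ) : Measure ((Fin N → ℝ) × ℝ × (Fin N → ℝ)) :=
  (volume.restrict (Ycube N)).prod
    ((volume.restrict (Set.Icc (0:ℝ) 1)).prod (volume.restrict (Ycube N)))

instance rm_prob {N : ℕ} : IsProbabilityMeasure (Rm N) := by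
  unfold Rm; infer_instance

lemma rm_ae {N : ℕ} : ∀ᵐ r ∂(Rm N), ∀ j, |r.1 j| ≤ 1 := by
  have h1 : ∀ᵐ a ∂(volume.restrict (Ycube N)), ∀ j, |a j| ≤ 1 := by
    refine (ae_restrict_iff' measurableSet_Icc).2 (Eventually.of_forall fun a ha j => ?_)
    have h0 := ha.1 j
    have h1 := ha.2 j
    simp only [Pi.zero_apply, Pi.one_apply] at h0 h1
    rw [abs_of_nonneg h0]; exact h1
  exact Measure.quasiMeasurePreserving_fst.ae h1

def corr {N : ℕ} (v : (Fin N → ℝ) → Fin N → ℝ) (y : Fin N → ℝ) : ℝ :=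
  ∫ r, ∑ j, (v (y - r.2.1 • r.1) j - v r.2.2 j) * r.1 j ∂(Rm N)

lemma per_integrable_shift {N : ℕ} {f : (Fin N → ℝ) → ℝ} (hm : Measurable f) (hp : ZPeriodic f)
    (hi : Integrable f (volume.restrict (Ycube N))) (s : Fin N → ℝ) :
    Integrable (fun y => f (y + s)) (volume.restrict (Ycube N)) := by
  refine ⟨(hm.comp (measurable_add_const s)).aestronglyMeasurable, ?_⟩
  have := hi.2
  unfold HasFiniteIntegral at *
  rwa [per_lintegral_shift (fun y => ‖f y‖ₑ) (fun y k => by rw [hp])]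

lemma shift_integrable {N : ℕ} {f : (Fin N → ℝ) → ℝ} (hm : Measurable f) (hp : ZPeriodic f)
    (hi : Integrable f (volume.restrict (Ycube N))) :
    Integrable (fun q : (Fin N → ℝ) × ((Fin N → ℝ) × ℝ × (Fin N → ℝ)) =>
      f (q.1 - q.2.2.1 • q.2.1)) ((volume.restrict (Ycube N)).prod (Rm N)) := by
  have hmm : Measurable (fun q : (Fin N → ℝ) × ((Fin N → ℝ) × ℝ × (Fin N → ℝ)) =>
      f (q.1 - q.2.2.1 • q.2.1)) := by fun_prop
  rw [integrable_prod_iff' hmm.aestronglyMeasurable]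
  constructor
  · refine Eventually.of_forall fun r => ?_
    simp only [sub_eq_add_neg]
    exact per_integrable_shift hm hp hi _
  · simp only [sub_eq_add_neg]
    have : ∀ r : (Fin N → ℝ) × ℝ × (Fin N → ℝ),
      ∫ y in Ycube N, ‖f (y + -(r.2.1 • r.1))‖ = ∫ y in Ycube N, ‖f y‖ := by
      intro r
      exact per_integral_shift (fun y => ‖f y‖) (fun y k => by simp only; rw [hp]) _
    simp_rw [this]
    exact integrable_const _

lemma z_integrable {N : ℕ} {f : (Fin N → ℝ) → ℝ} 
    (hi : Integrable f (volume.restrict (Ycube N))) :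
    Integrable (fun r : (Fin N → ℝ) × ℝ × (Fin N → ℝ) => f r.2.2) (Rm N) := by
  unfold Rm
  exact (hi.comp_snd _).comp_snd _

lemma corr_integrable {N : ℕ} {v : (Fin N → ℝ) → Fin N → ℝ} (hm : Measurable v)
    (hp : ∀ j, ZPeriodic fun y => v y j)
    (hi : ∀ j, Integrable (fun y => v y j) (volume.restrict (Ycube N)))
    (b : (Fin N → ℝ) → ℝ) (hb : Measurable b) (C : ℝ) (hbC : ∀ y, |b y| ≤ C) (j : Fin N) :
    Integrable (fun q : (Fin N → ℝ) × ((Fin N → ℝ) × ℝ × (Fin N → ℝ)) =>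
      (v (q.1 - q.2.2.1 • q.2.1) j - v q.2.2.2 j) * q.2.1 j * b q.1)
      ((volume.restrict (Ycube N)).prod (Rm N)) := by
  have h1 := shift_integrable (f := fun y => v y j) (by fun_prop) (hp j) (hi j)
  have h2 := ((z_integrable (hi j)).comp_snd (volume.restrict (Ycube N)))
  have h3 := (h1.sub h2).mul_bdd (c := C) (g := fun q : (Fin N → ℝ) × ((Fin N → ℝ) × ℝ × (Fin N → ℝ)) => q.2.1 j * b q.1) (by fun_prop) (by
    have : ∀ᵐ q ∂((volume.restrict (Ycube N)).prod (Rm N)), ∀ j, |q.2.1 j| ≤ 1 :=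
      Measure.quasiMeasurePreserving_snd.ae rm_ae
    filter_upwards [this] with q hq
    rw [Real.norm_eq_abs, abs_mul]
    have h0 : 0 ≤ C := (abs_nonneg _).trans (hbC 0)
    calc |q.2.1 j| * |b q.1| ≤ 1 * C := by gcongr; exact hq j; exact hbC _
      _ = C := one_mul _)
  refine h3.congr (Eventually.of_forall fun q => ?_)
  simp only [Pi.sub_apply]
  ring

lemma corr_test {N : ℕ} {v : (Fin N → ℝ) → Fin N → ℝ} (hm : Measurable v)
    (hp : ∀ j, ZPeriodic fun y => v y j)
    (hi : ∀ j, Integrable (fun y => v y j) (volume.restrict (Ycube N)))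
    (b : (Fin N → ℝ) → ℝ) (hb : Measurable b) (hbp : ZPeriodic b)
    (C : ℝ) (hbC : ∀ y, |b y| ≤ C) :
    ∫ y in Ycube N, corr v y * b y =
      ∫ r, ∑ j, ((∫ y in Ycube N, v y j * b (y + r.2.1 • r.1))
        - v r.2.2 j * ∫ y in Ycube N, b y) * r.1 j ∂(Rm N) := by
  have hK : Integrable (fun q : (Fin N → ℝ) × ((Fin N → ℝ) × ℝ × (Fin N → ℝ)) =>
      ∑ j, (v (q.1 - q.2.2.1 • q.2.1) j - v q.2.2.2 j) * q.2.1 j * b q.1)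
      ((volume.restrict (Ycube N)).prod (Rm N)) :=
    integrable_finsetSum _ fun j _ => corr_integrable hm hp hi b hb C hbC j
  have h1 : ∀ y, corr v y * b y =
      ∫ r, ∑ j, (v (y - r.2.1 • r.1) j - v r.2.2 j) * r.1 j * b y ∂(Rm N) := by
    intro y
    unfold corr
    rw [← integral_mul_const]
    simp_rw [Finset.sum_mul]
  simp_rw [h1]
  rw [integral_integral_swap hK]
  congr 1
  ext r
  have hA : ∀ j, Integrable (fun y => v (y - r.2.1 • r.1) j * b y)
      (volume.restrict (Ycube N)) := by
    intro j
    have := per_integrable_shift (f := fun y => v y j) (by fun_prop) (hp j) (hi j) (-(r.2.1 • r.1))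
    simp only [← sub_eq_add_neg] at this
    exact this.mul_bdd (c := C) hb.aestronglyMeasurable (Eventually.of_forall hbC)
  have hB : Integrable b (volume.restrict (Ycube N)) :=
    Integrable.of_bound hb.aestronglyMeasurable C (Eventually.of_forall hbC)
  have hsplit : ∀ y, ∑ j, (v (y - r.2.1 • r.1) j - v r.2.2 j) * r.1 j * b y =
     ∑ j, ((v (y - r.2.1 • r.1) j * b y) - v r.2.2 j * b y) * r.1 j := by
    intro y
    congr 1; ext j; ring
  simp_rw [hsplit]
  rw [integral_finsetSum]
  swap
  · intro j _
    exact ((hA j).sub (hB.const_mul (v r.2.2 j))).mul_const (r.1 j)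
  congr 1
  ext j
  rw [integral_mul_const, integral_sub (hA j) (hB.const_mul _), integral_const_mul]
  congr 2
  rw [← per_integral_shift (fun y => v (y - r.2.1 • r.1) j * b y) _ (r.2.1 • r.1)]
  · simp
  · intro y k
    have := hp j (y - r.2.1 • r.1) k
    simp only at this ⊢
    rw [hbp, ← this]
    congr 3
    abel

lemma corr_mean {N : ℕ} {v : (Fin N → ℝ) → Fin N → ℝ} (hm : Measurable v)
    (hp : ∀ j, ZPeriodic fun y => v y j)
    (hi : ∀ j, Integrable (fun y => v y j) (volume.restrict (Ycube N))) :
    ∫ y in Ycube N, corr v y = 0 := by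
  have := corr_test hm hp hi (fun _ => 1) measurable_const (fun _ _ => rfl) 1 (by simp)
  simp only [mul_one] at this
  rw [this]
  have h1 : (∫ y in Ycube N, (1:ℝ)) = 1 := by simp
  rw [h1]
  have hJ : ∀ j, Integrable (fun r : (Fin N → ℝ) × ℝ × (Fin N → ℝ) =>
      ((∫ y in Ycube N, v y j) - v r.2.2 j * 1) * r.1 j) (Rm N) := by
    intro j
    refine Integrable.mul_bdd (c := 1) ?_ (by fun_prop) ?_
    · exact (integrable_const _).sub ((z_integrable (hi j)).mul_const 1)
    · filter_upwards [rm_ae] with r hr using hr j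
  rw [integral_finsetSum _ fun j _ => hJ j]
  refine Finset.sum_eq_zero fun j _ => ?_
  have hJ' := hJ j
  unfold Rm at *
  rw [integral_prod _ hJ']
  have : ∀ a : Fin N → ℝ, ∫ s : ℝ × (Fin N → ℝ), ((∫ y in Ycube N, v y j) - v s.2 j * 1) * a j
     ∂((volume.restrict (Set.Icc (0:ℝ) 1)).prod (volume.restrict (Ycube N))) = 0 := by
    intro a
    rw [integral_mul_const, integral_fun_snd (fun z : Fin N → ℝ => (∫ y in Ycube N, v y j) - v z j * 1)]
    simp only [mul_one]
    rw [integral_sub (integrable_const _) (hi j)]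
    simp
  simp only [this, integral_zero]

lemma corr_grad {N : ℕ} {v : (Fin N → ℝ) → Fin N → ℝ} (hm : Measurable v)
    (hp : ∀ j, ZPeriodic fun y => v y j)
    (hi : ∀ j, Integrable (fun y => v y j) (volume.restrict (Ycube N)))
    (hcurl : ∀ g : (Fin N → ℝ) → ℝ, ContDiff ℝ (⊤ : ℕ∞) g → ZPeriodic g → ∀ i j,
      ∫ y in Ycube N, v y i * pd j g y = ∫ y in Ycube N, v y j * pd i g y)
    (g : (Fin N → ℝ) → ℝ) (hg : ContDiff ℝ (⊤ : ℕ∞) g) (hgp : ZPeriodic g) (i : Fin N) :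
    ∫ y in Ycube N, corr v y * pd i g y =
      -∫ y in Ycube N, (v y i - ∫ z in Ycube N, v z i) * g y := by
  obtain ⟨C, hC0, hC⟩ := pd_bdd i hg hgp
  have hct : ∀ j, Continuous (pd j g) := fun j => (pd_contDiff j hg).continuous
  rw [corr_test hm hp hi (pd i g) (hct i).measurable (pd_per i hgp) C hC]
  rw [per_int_pd i hg hgp]
  simp only [mul_zero, sub_zero]
  have hstep : ∀ r : (Fin N → ℝ) × ℝ × (Fin N → ℝ),
      ∑ j, (∫ y in Ycube N, v y j * pd i g (y + r.2.1 • r.1)) * r.1 j =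
      ∫ y in Ycube N, ∑ j, v y i * (r.1 j * pd j g (y + r.2.1 • r.1)) := by
    intro r
    rw [integral_finsetSum]
    · congr 1
      ext j
      have h1 := hcurl (fun y => g (y + r.2.1 • r.1)) (by fun_prop) (fun y k => by
        have := hgp (y + r.2.1 • r.1) k
        simp only; rw [← this]; congr 1; abel) i j
      simp_rw [pd_shift] at h1
      rw [← h1, ← integral_mul_const]
      congr 1
      ext y
      ring
    · intro j _
      obtain ⟨C, hC0, hC⟩ := pd_bdd j hg hgp
      refine (hi i).mul_bdd (c := |r.1 j| * C) (by have := hct j; fun_prop) (Eventually.of_forall fun y => ?_)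
      rw [norm_mul, Real.norm_eq_abs, Real.norm_eq_abs]
      gcongr
      exact hC _
  simp_rw [hstep]
  have hbd : ∀ j, Integrable (fun q : (Fin N → ℝ) × ((Fin N → ℝ) × ℝ × (Fin N → ℝ)) =>
      v q.1 i * (q.2.1 j * pd j g (q.1 + q.2.2.1 • q.2.1)))
      ((volume.restrict (Ycube N)).prod (Rm N)) := by
    intro j
    obtain ⟨C, hC0, hC⟩ := pd_bdd j hg hgp
    refine ((hi i).comp_fst (Rm N)).mul_bdd (c := C) (by have := hct j; fun_prop) ?_
    have : ∀ᵐ q ∂((volume.restrict (Ycube N)).prod (Rm N)), ∀ j, |q.2.1 j| ≤ 1 :=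
      Measure.quasiMeasurePreserving_snd.ae rm_ae
    filter_upwards [this] with q hq
    rw [Real.norm_eq_abs, abs_mul]
    calc |q.2.1 j| * _ ≤ 1 * C := by gcongr; exact hq j; exact hC _
      _ = C := one_mul _
  rw [← integral_integral_swap (integrable_finsetSum _ fun j _ => hbd j)]
  have hinner : ∀ y, ∫ r, ∑ j, v y i * (r.1 j * pd j g (y + r.2.1 • r.1)) ∂(Rm N) =
      v y i * ((∫ z in Ycube N, g z) - g y) := by
    intro y
    simp_rw [← Finset.mul_sum]
    rw [integral_const_mul]
    congr 1
    have hint : Integrable (fun r : (Fin N → ℝ) × ℝ × (Fin N → ℝ) =>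
        ∑ j, (r.1 j * pd j g (y + r.2.1 • r.1))) (Rm N) := by
      refine integrable_finsetSum _ fun j _ => ?_
      obtain ⟨C, hC0, hC⟩ := pd_bdd j hg hgp
      refine Integrable.of_bound (C := C) (by have := hct j; fun_prop) ?_
      filter_upwards [rm_ae] with q hq
      rw [Real.norm_eq_abs, abs_mul]
      calc |q.1 j| * _ ≤ 1 * C := by gcongr; exact hq j; exact hC _
        _ = C := one_mul _
    unfold Rm at *
    rw [integral_prod _ hint]
    have : ∀ a : Fin N → ℝ, ∫ s : ℝ × (Fin N → ℝ), ∑ j, (a j * pd j g (y + s.1 • a))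
        ∂((volume.restrict (Set.Icc (0:ℝ) 1)).prod (volume.restrict (Ycube N))) =
        g (a + y) - g y := by
      intro a
      rw [integral_fun_fst (fun t : ℝ => ∑ j, (a j * pd j g (y + t • a))), ftc_line hg]
      simp [add_comm]
    simp only [this]
    have hgi : Integrable g (volume.restrict (Ycube N)) :=
      hg.continuous.continuousOn.integrableOn_compact isCompact_Icc
    rw [integral_sub (per_integrable_shift hg.continuous.measurable hgp hgi y) (integrable_const _),
      per_integral_shift g hgp]
    simp
  simp_rw [hinner]
  obtain ⟨C', hC0', hC'⟩ := per_bdd hg.continuous hgp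
  have e1 : Integrable (fun y => v y i * g y) (volume.restrict (Ycube N)) :=
    (hi i).mul_bdd hg.continuous.aestronglyMeasurable (Eventually.of_forall hC')
  have hgi : Integrable g (volume.restrict (Ycube N)) :=
      hg.continuous.continuousOn.integrableOn_compact isCompact_Icc
  simp_rw [mul_sub, sub_mul]
  rw [integral_sub ((hi i).mul_const _) e1, integral_sub e1 (hgi.const_mul _), integral_mul_const,
    integral_const_mul]
  ring

lemma corr_per {N : ℕ} {v : (Fin N → ℝ) → Fin N → ℝ} 
    (hp : ∀ j, ZPeriodic fun y => v y j) : ZPeriodic (corr v) := by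
  intro y k
  unfold corr
  congr 1
  ext r
  congr 1
  ext j
  congr 2
  have := hp j (y - r.2.1 • r.1) k
  simp only at this
  rw [← this]
  congr 1
  abel_nf

lemma corr_young_aux {N : ℕ} (G : (Fin N → ℝ) → ℝ≥0∞) (hGm : Measurable G)
    (hGp : ∀ (y : Fin N → ℝ) (k : Fin N → ℤ), G (y + fun i => (k i : ℝ)) = G y) :
    ∫⁻ y in Ycube N, ∫⁻ r, (ENNReal.ofReal (1/2) * G (y - r.2.1 • r.1) +
      ENNReal.ofReal (1/2) * G r.2.2) ∂(Rm N) ≤ ∫⁻ y in Ycube N, G y := by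
  have e2 : ∫⁻ r, G r.2.2 ∂(Rm N) = ∫⁻ y in Ycube N, G y := by
    unfold Rm
    rw [lintegral_prod _ (by fun_prop)]
    have : ∀ a : Fin N → ℝ, ∫⁻ s : ℝ × (Fin N → ℝ), G s.2
        ∂((volume.restrict (Set.Icc (0:ℝ) 1)).prod (volume.restrict (Ycube N))) =
        ∫⁻ y in Ycube N, G y := by
      intro a
      rw [lintegral_prod _ (by fun_prop)]
      simp
    simp [this 0]
  have e1 : ∫⁻ y in Ycube N, ∫⁻ r, G (y - r.2.1 • r.1) ∂(Rm N) = ∫⁻ y in Ycube N, G y := by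
    rw [lintegral_lintegral_swap (by unfold Function.uncurry; fun_prop)]
    simp_rw [sub_eq_add_neg, per_lintegral_shift G hGp]
    simp
  have hs : ∀ y, ∫⁻ r, (ENNReal.ofReal (1/2) * G (y - r.2.1 • r.1) + ENNReal.ofReal (1/2) * G r.2.2) ∂(Rm N)
      = ENNReal.ofReal (1/2) * (∫⁻ r, G (y - r.2.1 • r.1) ∂(Rm N)) +
        ENNReal.ofReal (1/2) * (∫⁻ y in Ycube N, G y) := by
    intro y
    rw [lintegral_add_left (by fun_prop), lintegral_const_mul _ (by fun_prop),
      lintegral_const_mul _ (by fun_prop), e2]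
  simp_rw [hs]
  have hmeas : Measurable fun y : Fin N → ℝ => ∫⁻ r, G (y - r.2.1 • r.1) ∂(Rm N) := by
    have : Measurable fun q : (Fin N → ℝ) × ((Fin N → ℝ) × ℝ × (Fin N → ℝ)) =>
      G (q.1 - q.2.2.1 • q.2.1) := by fun_prop
    exact this.lintegral_prod_right'
  rw [lintegral_add_left (by fun_prop), lintegral_const_mul _ hmeas, e1]
  simp only [lintegral_const, measure_univ, mul_one]
  rw [← add_mul, ← ENNReal.ofReal_add (by norm_num) (by norm_num)]
  norm_num

lemma corr_young {N : ℕ} (hN : 1 ≤ N) {Φ : ℝ → ℝ} (hΦ : IsYoung Φ)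
    {v : (Fin N → ℝ) → Fin N → ℝ} (hm : Measurable v)
    (hp : ∀ (y : Fin N → ℝ) (k : Fin N → ℤ), v (y + fun i => (k i : ℝ)) = v y)
    {δ : ℝ} (hδ : 0 < δ) :
    ∫⁻ y in Ycube N, ENNReal.ofReal (Φ (|corr v y| / (2 * N * δ))) ≤
      ∫⁻ y in Ycube N, ENNReal.ofReal (Φ (enorm2 (v y) / δ)) := by
  have hN' : (0:ℝ) < N := by exact_mod_cast hN
  set e : (Fin N → ℝ) → ℝ := fun y => enorm2 (v y) / δ with he
  have hem : Measurable e := (enorm2_measurable.comp hm).div_const δ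
  have he0 : ∀ y, 0 ≤ e y := fun y => div_nonneg (enorm2_nonneg _) hδ.le
  set G : (Fin N → ℝ) → ℝ≥0∞ := fun y => ENNReal.ofReal (Φ (e y)) with hG
  have hGm : Measurable G := by
    have := ((young_cont hΦ).measurable.comp hem).ennreal_ofReal
    convert this using 2 with x
    simp [hG, abs_of_nonneg (he0 x)]
  have hGp : ∀ (y : Fin N → ℝ) (k : Fin N → ℤ), G (y + fun i => (k i : ℝ)) = G y := by
    intro y k
    simp only [hG, he, hp]
  have step1 : ∀ y, ENNReal.ofReal (Φ (|corr v y| / (2 * N * δ))) ≤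
      ∫⁻ r, (ENNReal.ofReal (1/2) * G (y - r.2.1 • r.1) + ENNReal.ofReal (1/2) * G r.2.2) ∂(Rm N) := by
    intro y
    have h1 : |corr v y| / (2 * N * δ) =
        |∫ r, (∑ j, (v (y - r.2.1 • r.1) j - v r.2.2 j) * r.1 j) / (2 * N * δ) ∂(Rm N)| := by
      rw [integral_div, abs_div, abs_of_pos (show 0 < 2 * N * δ by positivity)]
      rfl
    rw [h1]
    refine (young_jensen hΦ (f := fun r => (1/2) * e (y - r.2.1 • r.1) + (1/2) * e r.2.2)
      (by fun_prop) (fun r => ?_) ?_).trans ?_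
    · have := he0 (y - r.2.1 • r.1)
      have := he0 r.2.2
      positivity
    · filter_upwards [rm_ae] with r hr
      rw [abs_div, abs_of_pos (show 0 < 2 * N * δ by positivity), div_le_iff₀ (by positivity)]
      calc |∑ j, (v (y - r.2.1 • r.1) j - v r.2.2 j) * r.1 j|
          ≤ ∑ j, |(v (y - r.2.1 • r.1) j - v r.2.2 j) * r.1 j| := Finset.abs_sum_le_sum_abs _ _
        _ ≤ ∑ j : Fin N, (enorm2 (v (y - r.2.1 • r.1)) + enorm2 (v r.2.2)) := by
            refine Finset.sum_le_sum fun j _ => ?_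
            rw [abs_mul]
            have h1 := abs_le_enorm2 (v (y - r.2.1 • r.1)) j
            have h2 := abs_le_enorm2 (v r.2.2) j
            calc _ ≤ |v (y - r.2.1 • r.1) j - v r.2.2 j| * 1 := by gcongr; exact hr j
              _ ≤ _ := by
                rw [mul_one]
                exact (abs_sub _ _).trans (add_le_add h1 h2)
        _ = _ := by
            simp only [Finset.sum_const, Finset.card_univ, Fintype.card_fin, nsmul_eq_mul, he]
            field_simp
    · refine lintegral_mono fun r => ?_
      simp only [hG]
      rw [← ENNReal.ofReal_mul (by norm_num), ← ENNReal.ofReal_mul (by norm_num),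
        ← ENNReal.ofReal_add]
      · apply ENNReal.ofReal_le_ofReal
        have := hΦ.2.1.2 (show e (y - r.2.1 • r.1) ∈ Set.Ici 0 from he0 _)
          (show e r.2.2 ∈ Set.Ici 0 from he0 _) (show (0:ℝ) ≤ 1/2 by norm_num)
          (show (0:ℝ) ≤ 1/2 by norm_num) (by norm_num)
        simpa using this
      · exact mul_nonneg (by norm_num) (hΦ.2.2.2.2.1 _ (he0 _))
      · exact mul_nonneg (by norm_num) (hΦ.2.2.2.2.1 _ (he0 _))
  refine (lintegral_mono step1).trans ?_
  exact corr_young_aux G hGm hGp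

lemma corr_measurable {X : Type*} [MeasurableSpace X] {N : ℕ}
    {V : X → (Fin N → ℝ) → Fin N → ℝ}
    (hV : Measurable fun p : X × (Fin N → ℝ) => V p.1 p.2) :
    Measurable fun p : X × (Fin N → ℝ) => corr (V p.1) p.2 := by
  unfold corr
  apply StronglyMeasurable.measurable
  apply StronglyMeasurable.integral_prod_right
    (f := fun (p : X × (Fin N → ℝ)) (r : (Fin N → ℝ) × ℝ × (Fin N → ℝ)) => ∑ j, (V p.1 (p.2 - r.2.1 • r.1) j - V p.1 r.2.2 j) * r.1 j)
  apply Measurable.stronglyMeasurable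
  unfold Function.uncurry
  have h1 : Measurable fun q : (X × (Fin N → ℝ)) × ((Fin N → ℝ) × ℝ × (Fin N → ℝ)) =>
      V q.1.1 (q.1.2 - q.2.2.1 • q.2.1) :=
    hV.comp (g := fun p : X × (Fin N → ℝ) => V p.1 p.2)
      (f := fun q : (X × (Fin N → ℝ)) × ((Fin N → ℝ) × ℝ × (Fin N → ℝ)) =>
        (q.1.1, q.1.2 - q.2.2.1 • q.2.1)) (by fun_prop)
  have h2 : Measurable fun q : (X × (Fin N → ℝ)) × ((Fin N → ℝ) × ℝ × (Fin N → ℝ)) =>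
      V q.1.1 q.2.2.2 :=
    hV.comp (g := fun p : X × (Fin N → ℝ) => V p.1 p.2)
      (f := fun q : (X × (Fin N → ℝ)) × ((Fin N → ℝ) × ℝ × (Fin N → ℝ)) =>
        (q.1.1, q.2.2.2)) (by fun_prop)
  fun_prop

lemma corr_lux {X : Type*} [MeasurableSpace X] {ν : Measure X} {N : ℕ} (hN : 1 ≤ N)
    {Φ : ℝ → ℝ} (hΦ : IsYoung Φ) {V : X → (Fin N → ℝ) → Fin N → ℝ}
    (hV : Measurable fun p : X × (Fin N → ℝ) => V p.1 p.2)
    (hp : ∀ x (y : Fin N → ℝ) (k : Fin N → ℤ), V x (y + fun i => (k i : ℝ)) = V x y)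
    (h : luxNorm Φ (ν.prod (volume.restrict (Ycube N))) (fun p => enorm2 (V p.1 p.2)) < ⊤) :
    luxNorm Φ (ν.prod (volume.restrict (Ycube N))) (fun p => corr (V p.1) p.2) < ⊤ := by
  have hN' : (0:ℝ) < N := by exact_mod_cast hN
  obtain ⟨δ, h0, h1⟩ := lux_lt_top h
  refine lux_lt_top_of (δ := 2 * N * δ) (by positivity) (le_trans ?_ h1)
  have hmeas : ∀ {f : X × (Fin N → ℝ) → ℝ} (c : ℝ) (hc : 0 < c), Measurable f →
      Measurable fun p => ENNReal.ofReal (Φ (|f p| / c)) := by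
    intro f c hc hf
    have := ((young_cont hΦ).measurable.comp (hf.div_const c)).ennreal_ofReal
    convert this using 2 with x
    simp [abs_div, abs_of_pos hc]
  rw [lintegral_prod _ (hmeas _ (by positivity) (corr_measurable hV)).aemeasurable,
    lintegral_prod _ (hmeas (f := fun p => enorm2 (V p.1 p.2)) _ h0 (enorm2_measurable.comp hV)).aemeasurable]
  refine lintegral_mono fun x => ?_
  simp only [abs_of_nonneg (enorm2_nonneg _)]
  exact corr_young hN hΦ (hV.comp (measurable_prodMk_left (x := x))) (hp x) h0

lemma setInt_zero_of_pi {X : Type*} [mX : MeasurableSpace X] {ν : Measure X} {f : X → ℝ}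
    (hf : Integrable f ν) (C : Set (Set X)) (hC : IsPiSystem C) (m : MeasurableSpace X)
    (hm : m = MeasurableSpace.generateFrom C) (hle : m ≤ mX)
    (h0 : ∀ A ∈ C, ∫ x in A, f x ∂ν = 0) (h1 : ∫ x, f x ∂ν = 0) :
    ∀ A, MeasurableSet[m] A → ∫ x in A, f x ∂ν = 0 := by
  intro A hA
  induction A, hA using MeasurableSpace.induction_on_inter (m := m) hm hC with
  | empty => simp
  | basic t ht => exact h0 t ht
  | compl t ht ih =>
    have := integral_add_compl (hle t ht) hf
    rw [h1, ih, zero_add] at this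
    exact this
  | iUnion g hd hg ih =>
    rw [integral_iUnion (fun i => hle _ (hg i)) hd hf.integrableOn]
    simp [ih]

def molly {N : ℕ} {Ω : Type*} (T : (Fin N → ℝ) → Ω → Ω) (h : (Fin N → ℝ) → ℝ) (ψ : Ω → ℝ)
    (ω : Ω) : ℝ := ∫ s, h s * ψ (T s ω)

lemma molly_measurable {N : ℕ} {Ω : Type*} [MeasurableSpace Ω] {μ : Measure Ω}
    {T : (Fin N → ℝ) → Ω → Ω} (hT : IsDynSys μ T) {h : (Fin N → ℝ) → ℝ} (hh : Measurable h)
    {ψ : Ω → ℝ} (hψ : Measurable ψ) : Measurable (molly T h ψ) := by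
  have hTm := hT.2.2.2
  have : Measurable fun p : Ω × (Fin N → ℝ) => h p.2 * ψ (T p.2 p.1) :=
    (hh.comp measurable_snd).mul (hψ.comp (hTm.comp measurable_swap))
  exact this.stronglyMeasurable.integral_prod_right'.measurable

lemma molly_bdd {N : ℕ} {Ω : Type*} (T : (Fin N → ℝ) → Ω → Ω) {h : (Fin N → ℝ) → ℝ}
    (hh : Integrable h)
    {ψ : Ω → ℝ} (hψ : ∃ C : ℝ, ∀ ω, |ψ ω| ≤ C) : ∃ C : ℝ, ∀ ω, |molly T h ψ ω| ≤ C := by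
  obtain ⟨C, hC⟩ := hψ
  refine ⟨∫ s, ‖h s‖ * C, fun ω => ?_⟩
  unfold molly
  rw [← Real.norm_eq_abs]
  refine norm_integral_le_of_norm_le (hh.norm.mul_const C) (Eventually.of_forall fun s => ?_)
  rw [norm_mul]
  gcongr
  exact hC _

lemma flow_zero {N : ℕ} {Ω : Type*} [MeasurableSpace Ω] {μ : Measure Ω}
    [IsProbabilityMeasure μ] (hgen : CountGenModNull μ)
    {T : (Fin N → ℝ) → Ω → Ω} (hT : IsDynSys μ T) {f : Ω → ℝ} (hf : Integrable f μ)
    (hfm : Measurable f)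
    (h : ∀ ψ : Ω → ℝ, Measurable ψ → (∃ C : ℝ, ∀ ω, |ψ ω| ≤ C) → ∀ ρ : (Fin N → ℝ) → ℝ,
      ContDiff ℝ (⊤ : ℕ∞) ρ → HasCompactSupport ρ → ∫ ω, f ω * molly T ρ ψ ω ∂μ = 0) :
    f =ᵐ[μ] 0 := by
  obtain ⟨S, hS, hgen⟩ := hgen
  have hTm := hT.2.2.2
  -- a.e. in s
  have key : ∀ A, MeasurableSet A → ∀ᵐ s : Fin N → ℝ, ∫ ω, f ω * A.indicator (fun _ => (1:ℝ)) (T s ω) ∂μ = 0 := by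
    intro A hA
    set ψ : Ω → ℝ := A.indicator (fun _ => (1:ℝ)) with hψd
    have hψ : Measurable ψ := measurable_const.indicator hA
    have hψb : ∀ ω, |ψ ω| ≤ 1 := by
      intro ω
      by_cases hω : ω ∈ A <;> simp [hψd, hω]
    have hm0 : Measurable fun p : (Fin N → ℝ) × Ω => f p.2 * ψ (T p.1 p.2) :=
      (hfm.comp measurable_snd).mul (hψ.comp hTm)
    have hbd : ∀ s, ‖∫ ω, f ω * ψ (T s ω) ∂μ‖ ≤ ∫ ω, ‖f ω‖ ∂μ := by
      intro s
      refine norm_integral_le_of_norm_le hf.norm (Eventually.of_forall fun ω => ?_)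
      rw [norm_mul]
      calc ‖f ω‖ * ‖ψ (T s ω)‖ ≤ ‖f ω‖ * 1 := by gcongr; exact hψb _
        _ = _ := mul_one _
    have hsm : StronglyMeasurable fun s => ∫ ω, f ω * ψ (T s ω) ∂μ :=
      hm0.stronglyMeasurable.integral_prod_right'
    apply ae_eq_zero_of_integral_contDiff_smul_eq_zero
    · have : LocallyIntegrable (fun _ : Fin N → ℝ => ∫ ω, ‖f ω‖ ∂μ) := locallyIntegrable_const _
      refine this.mono hsm.aestronglyMeasurable (Eventually.of_forall fun s => ?_)
      refine (hbd s).trans (le_abs_self _)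
    · intro ρ hρ hρc
      have hρi : Integrable ρ := hρ.continuous.integrable_of_hasCompactSupport hρc
      have := h ψ hψ ⟨1, hψb⟩ ρ hρ hρc
      unfold molly at this
      simp_rw [← integral_const_mul] at this
      rw [integral_integral_swap] at this
      · rw [← this]
        congr 1
        ext s
        rw [smul_eq_mul, ← integral_const_mul]
        congr 1
        ext ω
        ring
      · have h1 := (hf.mul_prod hρi).mul_bdd (c := 1)
          (g := fun p : Ω × (Fin N → ℝ) => ψ (T p.2 p.1))
          (hψ.comp (hTm.comp measurable_swap)).aestronglyMeasurable
          (Eventually.of_forall fun p => hψb _)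
        refine h1.congr (Eventually.of_forall fun p => ?_)
        simp only [Function.uncurry]
        ring
  set C := generateSetAlgebra (Set.range S) with hCd
  have hCc : C.Countable := countable_generateSetAlgebra (Set.countable_range S)
  have hCg : MeasurableSpace.generateFrom C = MeasurableSpace.generateFrom (Set.range S) :=
    generateFrom_generateSetAlgebra_eq
  have hle : MeasurableSpace.generateFrom (Set.range S) ≤ ‹MeasurableSpace Ω› := by
    apply MeasurableSpace.generateFrom_le
    rintro _ ⟨n, rfl⟩
    exact hS n
  have hCm : ∀ A ∈ C, MeasurableSet A := fun A hA =>
    hle A (hCg ▸ MeasurableSpace.measurableSet_generateFrom hA)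
  have hae : ∀ᵐ s : Fin N → ℝ, ∀ A ∈ C,
      ∫ ω, f ω * A.indicator (fun _ => (1:ℝ)) (T s ω) ∂μ = 0 :=
    (ae_ball_iff hCc).2 fun A hA => key A (hCm A hA)
  obtain ⟨s, hs⟩ := hae.exists
  have hTs := hT.2.2.1 s
  have hTn := hT.2.2.1 (-s)
  have hinv : ∀ ω, T (-s) (T s ω) = ω := by
    intro ω
    have := congrFun (hT.2.1 (-s) s) ω
    rw [neg_add_cancel, hT.1] at this
    exact this.symm
  set f' := fun ω => f (T (-s) ω) with hf'
  have hf'm : Measurable f' := hfm.comp hTn.measurable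
  have hf'i : Integrable f' μ := hTn.integrable_comp_of_integrable hf
  have hA0 : ∀ A ∈ C, ∫ ω in A, f' ω ∂μ = 0 := by
    intro A hA
    rw [← integral_indicator (hCm A hA), ← hs A hA]
    have hmm : AEStronglyMeasurable (A.indicator f') (Measure.map (T s) μ) :=
      (hf'm.indicator (hCm A hA)).aestronglyMeasurable
    have := integral_map hTs.measurable.aemeasurable hmm
    rw [hTs.map_eq] at this
    rw [this]
    congr 1
    ext ω
    by_cases hω : T s ω ∈ A
    · simp [hω, hf', hinv]
    · simp [hω]
  have halg : IsSetAlgebra C := isSetAlgebra_generateSetAlgebra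
  have hall := setInt_zero_of_pi hf'i C (fun A hA B hB _ => halg.inter_mem hA hB) _ hCg.symm hle hA0
    (by simpa using hA0 _ halg.univ_mem)
  have hf'0 : f' =ᵐ[μ] 0 := by
    apply Integrable.ae_eq_zero_of_forall_setIntegral_eq_zero hf'i
    intro A hA _
    obtain ⟨B, hB, hAB⟩ := hgen A hA
    rw [setIntegral_congr_set (measure_symmDiff_eq_zero_iff.1 hAB)]
    exact hall B hB
  have := hTs.quasiMeasurePreserving.ae hf'0
  filter_upwards [this] with ω hω
  simpa [hf', hinv] using hω

lemma prod_zero {N : ℕ} {Ω : Type*} [MeasurableSpace Ω] {μ : Measure Ω}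
    [IsProbabilityMeasure μ] (hgen : CountGenModNull μ)
    {T : (Fin N → ℝ) → Ω → Ω} (hT : IsDynSys μ T)
    {Q : Set (Fin N → ℝ)} (hQo : IsOpen Q) (hQf : IsFiniteMeasure (volume.restrict Q))
    {F : (Fin N → ℝ) × Ω → ℝ}
    (hFm : Measurable F) (hF : Integrable F ((volume.restrict Q).prod μ))
    (h : ∀ φ : (Fin N → ℝ) → ℝ, ContDiff ℝ (⊤ : ℕ∞) φ → HasCompactSupport φ → tsupport φ ⊆ Q →
      ∀ ψ : Ω → ℝ, Measurable ψ → (∃ C : ℝ, ∀ ω, |ψ ω| ≤ C) → ∀ ρ : (Fin N → ℝ) → ℝ,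
      ContDiff ℝ (⊤ : ℕ∞) ρ → HasCompactSupport ρ →
      ∫ x in Q, ∫ ω, F (x, ω) * φ x * molly T ρ ψ ω ∂μ = 0) :
    ∀ᵐ p ∂((volume.restrict Q).prod μ), F p = 0 := by
  -- step 1
  have s1 : ∀ φ : (Fin N → ℝ) → ℝ, ContDiff ℝ (⊤ : ℕ∞) φ → HasCompactSupport φ → tsupport φ ⊆ Q →
      ∀ᵐ ω ∂μ, ∫ x in Q, F (x, ω) * φ x = 0 := by
    intro φ hφ hφc hφQ
    obtain ⟨Cφ, hCφ⟩ := hφc.exists_bound_of_continuous hφ.continuous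
    have hFφ : Integrable (fun p : (Fin N → ℝ) × Ω => F p * φ p.1) ((volume.restrict Q).prod μ) :=
      hF.mul_bdd (c := Cφ) (hφ.continuous.measurable.comp measurable_fst).aestronglyMeasurable
        (Eventually.of_forall fun p => hCφ _)
    refine flow_zero hgen hT (f := fun ω => ∫ x in Q, F (x, ω) * φ x) hFφ.integral_prod_right ?_ ?_
    · have : Measurable fun p : (Fin N → ℝ) × Ω => F p * φ p.1 :=
        hFm.mul (hφ.continuous.measurable.comp measurable_fst)
      exact this.stronglyMeasurable.integral_prod_left'.measurable
    · intro ψ hψ hψb ρ hρ hρc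
      rw [← h φ hφ hφc hφQ ψ hψ hψb ρ hρ hρc]
      obtain ⟨C, hC⟩ := molly_bdd T (hρ.continuous.integrable_of_hasCompactSupport hρc) hψb
      have hmol := molly_measurable hT hρ.continuous.measurable hψ
      rw [integral_integral_swap]
      · congr 1
        ext ω
        rw [integral_mul_const]
      · exact hFφ.mul_bdd (c := C) (g := fun p => molly T ρ ψ p.2)
          (hmol.comp measurable_snd).aestronglyMeasurable
          (Eventually.of_forall fun p => hC _)
  have s2 : ∀ A : Set Ω, MeasurableSet A → ∀ᵐ x ∂(volume.restrict Q), ∫ ω in A, F (x, ω) ∂μ = 0 := by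
    intro A hA
    have hFA : Integrable F ((volume.restrict Q).prod (μ.restrict A)) := by
      refine hF.mono_measure ?_
      exact Measure.prod_mono le_rfl Measure.restrict_le_self
    rw [ae_restrict_iff' hQo.measurableSet]
    apply hQo.ae_eq_zero_of_integral_contDiff_smul_eq_zero
    · have : IntegrableOn (fun x => ∫ ω in A, F (x, ω) ∂μ) Q := hFA.integral_prod_left
      exact this.locallyIntegrableOn
    · intro φ hφ hφc hφQ
      have e1 : ∫ x, φ x • ∫ ω in A, F (x, ω) ∂μ = ∫ x in Q, φ x • ∫ ω in A, F (x, ω) ∂μ := by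
        refine (setIntegral_eq_integral_of_forall_compl_eq_zero fun x hx => ?_).symm
        rw [image_eq_zero_of_notMem_tsupport (fun hh => hx (hφQ hh)), zero_smul]
      rw [e1]
      simp_rw [smul_eq_mul, ← integral_const_mul]
      obtain ⟨Cφ, hCφ⟩ := hφc.exists_bound_of_continuous hφ.continuous
      rw [integral_integral_swap]
      · refine integral_eq_zero_of_ae ?_
        filter_upwards [ae_restrict_of_ae (s := A) (s1 φ hφ hφc hφQ)] with ω hω
        simp_rw [mul_comm (φ _)]
        exact hω
      · refine hFA.bdd_mul (c := Cφ) (f := fun p : (Fin N → ℝ) × Ω => φ p.1)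
          (hφ.continuous.measurable.comp measurable_fst).aestronglyMeasurable
          (Eventually.of_forall fun p => hCφ _)
  have s3 : ∀ B : Set (Fin N → ℝ), MeasurableSet B → ∀ A : Set Ω, MeasurableSet A →
      ∫ p in B ×ˢ A, F p ∂((volume.restrict Q).prod μ) = 0 := by
    intro B hB A hA
    rw [setIntegral_prod _ hF.integrableOn]
    refine integral_eq_zero_of_ae ?_
    exact ae_restrict_of_ae (s2 A hA)
  apply Integrable.ae_eq_zero_of_forall_setIntegral_eq_zero hF
  intro A hA _
  refine setInt_zero_of_pi hF _ isPiSystem_prod _ generateFrom_prod.symm le_rfl ?_ ?_ A hA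
  · rintro _ ⟨B, hB, A, hA, rfl⟩
    exact s3 B hB A hA
  · have := s3 Set.univ MeasurableSet.univ Set.univ MeasurableSet.univ
    simpa using this

lemma pd_comm {N : ℕ} (i j : Fin N) {θ : (Fin N → ℝ) → ℝ} (hθ : ContDiff ℝ (⊤ : ℕ∞) θ) 
    (x : Fin N → ℝ) : pd i (pd j θ) x = pd j (pd i θ) x := by
  have h2 : ContDiff ℝ (⊤ : ℕ∞) (fderiv ℝ θ) := hθ.fderiv_right (by simp)
  have hd : DifferentiableAt ℝ (fderiv ℝ θ) x := h2.differentiable (by simp) x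
  have key : ∀ a b : Fin N, pd a (pd b θ) x =
      fderiv ℝ (fderiv ℝ θ) x (Pi.single a 1) (Pi.single b 1) := by
    intro a b
    unfold pd
    rw [fderiv_clm_apply hd (differentiableAt_const _)]
    simp
  rw [key, key]
  have hs : IsSymmSndFDerivAt ℝ θ x := by
    apply ContDiffAt.isSymmSndFDerivAt (n := (⊤ : ℕ∞)) hθ.contDiffAt
    simp
    exact WithTop.coe_le_coe.2 (le_top : (2:ℕ∞) ≤ ⊤)
  exact hs _ _

lemma pd_tsupport {N : ℕ} (i : Fin N) (θ : (Fin N → ℝ) → ℝ) :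
    tsupport (pd i θ) ⊆ tsupport θ := by
  refine subset_trans ?_ (tsupport_fderiv_subset ℝ (f := θ))
  refine closure_mono fun x hx => ?_
  simp only [Function.mem_support] at hx ⊢
  intro h
  apply hx
  simp [pd, h]

lemma pd_compact {N : ℕ} (i : Fin N) {θ : (Fin N → ℝ) → ℝ} (h : HasCompactSupport θ) :
    HasCompactSupport (pd i θ) :=
  IsCompact.of_isClosed_subset h (isClosed_tsupport _) (pd_tsupport i θ)

lemma pd_theta {N : ℕ} (j : Fin N) {φ g ρ : (Fin N → ℝ) → ℝ}
    (hφ : ContDiff ℝ (⊤ : ℕ∞) φ) (hg : ContDiff ℝ (⊤ : ℕ∞) g) (hρ : ContDiff ℝ (⊤ : ℕ∞) ρ)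
    (c d : ℝ) (z x : Fin N → ℝ) :
    pd j (fun x => φ x * g (d • x) * ρ (z - c • x)) x =
      d * ((φ x * pd j g (d • x)) * ρ (z - c • x)) + (pd j φ x * g (d • x)) * ρ (z - c • x) -
        c * ((φ x * g (d • x)) * pd j ρ (z - c • x)) := by
  have h1 : HasFDerivAt φ (fderiv ℝ φ x) x := (hφ.differentiable (by simp) x).hasFDerivAt
  have h2 : HasFDerivAt g (fderiv ℝ g (d • x)) (d • x) :=
    (hg.differentiable (by simp) _).hasFDerivAt
  have h3 : HasFDerivAt ρ (fderiv ℝ ρ (z - c • x)) (z - c • x) :=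
    (hρ.differentiable (by simp) _).hasFDerivAt
  have l2 : HasFDerivAt (fun x : Fin N → ℝ => d • x) (d • ContinuousLinearMap.id ℝ (Fin N → ℝ)) x :=
    (hasFDerivAt_id x).const_smul d
  have l3 : HasFDerivAt (fun x : Fin N → ℝ => z - c • x)
      (-(c • ContinuousLinearMap.id ℝ (Fin N → ℝ))) x :=
    ((hasFDerivAt_id x).const_smul c).const_sub z
  have := (h1.mul (h2.comp x l2)).mul (h3.comp x l3)
  unfold pd
  rw [HasFDerivAt.fderiv (f := fun x => φ x * g (d • x) * ρ (z - c • x)) this]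
  simp
  ring

lemma fub {N : ℕ} {Ω : Type*} [MeasurableSpace Ω] {μ : Measure Ω}
    [IsProbabilityMeasure μ] {T : (Fin N → ℝ) → Ω → Ω} (hT : IsDynSys μ T)
    {ν : Measure (Fin N → ℝ)} [IsFiniteMeasure ν] {D : (Fin N → ℝ) × Ω → ℝ}
    (hDm : Measurable D) (hD : Integrable D (ν.prod μ))
    {a h : (Fin N → ℝ) → ℝ} (ha : Measurable a) {Ca : ℝ} (hCa : ∀ x, |a x| ≤ Ca)
    (hh : Measurable h) (hhi : Integrable h)
    {ψ : Ω → ℝ} (hψ : Measurable ψ) {C : ℝ} (hC : ∀ ω, |ψ ω| ≤ C) (c : ℝ) :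
    Integrable (fun z => ∫ p, D p * (a p.1 * h (z - c • p.1)) * ψ (T z p.2) ∂(ν.prod μ)) ∧
    ∫ z, ∫ p, D p * (a p.1 * h (z - c • p.1)) * ψ (T z p.2) ∂(ν.prod μ) =
      ∫ p, D p * a p.1 * molly T h ψ (T (c • p.1) p.2) ∂(ν.prod μ) := by
  have hTm := hT.2.2.2
  have hC0 : 0 ≤ C ∨ IsEmpty Ω := by
    rcases isEmpty_or_nonempty Ω with h | ⟨⟨ω⟩⟩
    · right; exact h
    · left; exact (abs_nonneg _).trans (hC ω)
  have hm : Measurable fun q : ((Fin N → ℝ) × Ω) × (Fin N → ℝ) =>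
      D q.1 * (a q.1.1 * h (q.2 - c • q.1.1)) * ψ (T q.2 q.1.2) := by
    have e1 : Measurable fun q : ((Fin N → ℝ) × Ω) × (Fin N → ℝ) => ψ (T q.2 q.1.2) :=
      hψ.comp (hTm.comp (f := fun q : ((Fin N → ℝ) × Ω) × (Fin N → ℝ) => (q.2, q.1.2)) (by fun_prop))
    fun_prop
  have hint : Integrable (fun q : ((Fin N → ℝ) × Ω) × (Fin N → ℝ) =>
      D q.1 * (a q.1.1 * h (q.2 - c • q.1.1)) * ψ (T q.2 q.1.2)) ((ν.prod μ).prod volume) := by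
    have hslice : ∀ p : (Fin N → ℝ) × Ω, Integrable (fun z =>
        D p * (a p.1 * h (z - c • p.1)) * ψ (T z p.2)) := by
      intro p
      refine Integrable.mul_bdd (c := C) ?_ ?_ (Eventually.of_forall fun z => hC _)
      · exact ((hhi.comp_sub_right (c • p.1)).const_mul _).const_mul _
      · exact (hψ.comp (hTm.comp (f := fun z : Fin N → ℝ => (z, p.2)) (by fun_prop))).aestronglyMeasurable
    rw [integrable_prod_iff hm.aestronglyMeasurable]
    refine ⟨Eventually.of_forall hslice, ?_⟩
    refine Integrable.mono' (hD.norm.mul_const (Ca * (∫ z, ‖h z‖) * C)) ?_ ?_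
    · exact hm.stronglyMeasurable.norm.integral_prod_right'.aestronglyMeasurable
    · refine Eventually.of_forall fun p => ?_
      rw [Real.norm_of_nonneg (integral_nonneg fun z => norm_nonneg _)]
      have e2 : ∫ z, ‖D p‖ * (Ca * ‖h (z - c • p.1)‖ * C) = ‖D p‖ * (Ca * (∫ z, ‖h z‖) * C) := by
        rw [integral_const_mul, integral_mul_const, integral_const_mul,
          integral_sub_right_eq_self (fun z => ‖h z‖)]
      rw [← e2]
      refine integral_mono (hslice p).norm ?_ fun z => ?_
      · exact ((((hhi.comp_sub_right (c • p.1)).norm).const_mul Ca).mul_const C).const_mul _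
      · simp only [norm_mul]
        have hCa0 : 0 ≤ Ca := (abs_nonneg _).trans (hCa 0)
        have hCp : 0 ≤ C := (abs_nonneg _).trans (hC p.2)
        have h1 : ‖a p.1‖ ≤ Ca := hCa _
        have h2 : ‖ψ (T z p.2)‖ ≤ C := hC _
        rw [mul_assoc]
        gcongr
  refine ⟨hint.integral_prod_right, ?_⟩
  rw [← integral_integral_swap (f := fun (p : (Fin N → ℝ) × Ω) (z : Fin N → ℝ) =>
    D p * (a p.1 * h (z - c • p.1)) * ψ (T z p.2)) hint]
  congr 1
  ext p
  unfold molly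
  rw [← integral_const_mul,
    ← integral_sub_right_eq_self (fun s => D p * a p.1 * (h s * ψ (T s (T (c • p.1) p.2)))) (c • p.1)]
  congr 1
  ext z
  have := congrFun (hT.2.1 (z - c • p.1) (c • p.1)) p.2
  rw [sub_add_cancel] at this
  rw [this]
  simp only [Function.comp]
  ring

lemma int_comb {X : Type*} [MeasurableSpace X] {ν : Measure X} {a b e : X → ℝ}
    (ha : Integrable a ν) (hb : Integrable b ν) (he : Integrable e ν) (c d : ℝ) :
    ∫ x, (d * a x + b x - c * e x) ∂ν = d * ∫ x, a x ∂ν + ∫ x, b x ∂ν - c * ∫ x, e x ∂ν := by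
  have h1 : Integrable (fun x => d * a x + b x) ν := (ha.const_mul d).add hb
  rw [integral_sub h1 (he.const_mul c), integral_add (ha.const_mul d) hb, integral_const_mul,
    integral_const_mul]

lemma identK {N : ℕ} {Ω : Type*} [MeasurableSpace Ω] {μ : Measure Ω}
    [IsProbabilityMeasure μ] {T : (Fin N → ℝ) → Ω → Ω} (hT : IsDynSys μ T)
    {Q : Set (Fin N → ℝ)} (hQf : IsFiniteMeasure (volume.restrict Q))
    {u : (Fin N → ℝ) → Ω → ℝ} {Du : (Fin N → ℝ) → Ω → Fin N → ℝ}
    (hDm : Measurable fun p : (Fin N → ℝ) × Ω => Du p.1 p.2)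
    (hDi : ∀ i, Integrable (fun p : (Fin N → ℝ) × Ω => Du p.1 p.2 i) ((volume.restrict Q).prod μ))
    (hgrad : ∀ (i : Fin N) (φ : (Fin N → ℝ) → ℝ),
      ContDiff ℝ (⊤ : ℕ∞) φ → HasCompactSupport φ → tsupport φ ⊆ Q →
      ∀ ψ : Ω → ℝ, Measurable ψ → (∃ C : ℝ, ∀ ω, |ψ ω| ≤ C) →
        (∫ p, u p.1 p.2 * fderiv ℝ φ p.1 (Pi.single i 1) * ψ p.2
            ∂((volume.restrict Q).prod μ)) =
          -(∫ p, Du p.1 p.2 i * φ p.1 * ψ p.2 ∂((volume.restrict Q).prod μ)))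
    {φ g ρ : (Fin N → ℝ) → ℝ} (hφ : ContDiff ℝ (⊤ : ℕ∞) φ) (hφc : HasCompactSupport φ)
    (hφQ : tsupport φ ⊆ Q) (hg : ContDiff ℝ (⊤ : ℕ∞) g) (hgp : ZPeriodic g)
    (hρ : ContDiff ℝ (⊤ : ℕ∞) ρ) (hρc : HasCompactSupport ρ)
    {ψ : Ω → ℝ} (hψ : Measurable ψ) (hψb : ∃ C : ℝ, ∀ ω, |ψ ω| ≤ C) (c d : ℝ) (i j : Fin N)
    (I : Fin N → ((Fin N → ℝ) → ℝ) → ((Fin N → ℝ) → ℝ) → ((Fin N → ℝ) → ℝ) → ℝ)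
    (hI : I = fun i φ h g => ∫ x in Q, ∫ ω, Du x ω i * φ x * molly T h ψ (T (c • x) ω) *
      g (d • x) ∂μ) :
    d * I i φ ρ (pd j g) + I i (pd j φ) ρ g - c * I i φ (pd j ρ) g =
    d * I j φ ρ (pd i g) + I j (pd i φ) ρ g - c * I j φ (pd i ρ) g := by
  obtain ⟨C, hC⟩ := hψb
  set P := (volume.restrict Q).prod μ with hP
  have hTm := hT.2.2.2
  -- Fubini in the needed form
  have fubI : ∀ (i : Fin N) (φ h g : (Fin N → ℝ) → ℝ), Continuous φ → HasCompactSupport φ →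
      Continuous h → HasCompactSupport h → Continuous g → ZPeriodic g →
      (∀ z, Integrable (fun p : (Fin N → ℝ) × Ω =>
        Du p.1 p.2 i * ((φ p.1 * g (d • p.1)) * h (z - c • p.1)) * ψ (T z p.2)) P) ∧
      Integrable (fun z => ∫ p, Du p.1 p.2 i * ((φ p.1 * g (d • p.1)) * h (z - c • p.1)) *
        ψ (T z p.2) ∂P) ∧
      ∫ z, ∫ p, Du p.1 p.2 i * ((φ p.1 * g (d • p.1)) * h (z - c • p.1)) * ψ (T z p.2) ∂P =
        I i φ h g := by
    intro i φ h g hφ hφc hh hhc hg hgp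
    obtain ⟨C1, hC1⟩ := hφc.exists_bound_of_continuous hφ
    obtain ⟨C2, hC20, hC2⟩ := per_bdd hg hgp
    obtain ⟨C3, hC3⟩ := hhc.exists_bound_of_continuous hh
    have hC10 : 0 ≤ C1 := (norm_nonneg _).trans (hC1 0)
    have hbd : ∀ x, |φ x * g (d • x)| ≤ C1 * C2 := by
      intro x
      rw [abs_mul]
      exact mul_le_mul (hC1 x) (hC2 _) (abs_nonneg _) hC10
    have hDim : Measurable fun p : (Fin N → ℝ) × Ω => Du p.1 p.2 i := by fun_prop
    have hhi := hh.integrable_of_hasCompactSupport (μ := volume) hhc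
    obtain ⟨f1, f2⟩ := fub hT hDim (hDi i) (a := fun x => φ x * g (d • x)) (by fun_prop) hbd
      hh.measurable hhi hψ hC c
    refine ⟨fun z => ?_, f1, f2.trans ?_⟩
    · have hψz : Measurable fun p : (Fin N → ℝ) × Ω => ψ (T z p.2) :=
        hψ.comp ((hT.2.2.1 z).measurable.comp measurable_snd)
      have hmm : Measurable fun p : (Fin N → ℝ) × Ω => φ p.1 * g (d • p.1) * h (z - c • p.1) := by
        fun_prop
      refine ((hDi i).mul_bdd (c := C1 * C2 * C3) hmm.aestronglyMeasurable
        (Eventually.of_forall fun p => ?_)).mul_bdd (c := C) hψz.aestronglyMeasurable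
        (Eventually.of_forall fun p => hC _)
      rw [norm_mul]
      exact mul_le_mul (hbd _) (hC3 _) (norm_nonneg _) (by positivity)
    · rw [hI]
      simp only
      obtain ⟨C4, hC4⟩ := molly_bdd T hhi ⟨C, hC⟩
      have hmol : Measurable fun p : (Fin N → ℝ) × Ω => molly T h ψ (T (c • p.1) p.2) :=
        (molly_measurable hT hh.measurable hψ).comp
          (hTm.comp (f := fun p : (Fin N → ℝ) × Ω => (c • p.1, p.2)) (by fun_prop))
      have hmm : Measurable fun p : (Fin N → ℝ) × Ω => φ p.1 * g (d • p.1) := by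
        fun_prop
      have hfi : Integrable (fun p : (Fin N → ℝ) × Ω => Du p.1 p.2 i * (φ p.1 * g (d • p.1)) *
          molly T h ψ (T (c • p.1) p.2)) P :=
        ((hDi i).mul_bdd (c := C1 * C2) hmm.aestronglyMeasurable
          (Eventually.of_forall fun p => hbd _)).mul_bdd (c := C4) hmol.aestronglyMeasurable
          (Eventually.of_forall fun p => hC4 _)
      refine (integral_prod _ hfi).trans ?_
      congr 1
      ext x
      congr 1
      ext ω
      ring
  -- identity for each z
  have hz : ∀ (i j : Fin N) (z : Fin N → ℝ),
      ∫ p, Du p.1 p.2 i * pd j (fun x => φ x * g (d • x) * ρ (z - c • x)) p.1 * ψ (T z p.2) ∂P =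
      -∫ p, u p.1 p.2 * pd i (pd j (fun x => φ x * g (d • x) * ρ (z - c • x))) p.1 * ψ (T z p.2) ∂P := by
    intro i j z
    have hθ : ContDiff ℝ (⊤ : ℕ∞) (fun x => φ x * g (d • x) * ρ (z - c • x)) := by fun_prop
    have hsub : tsupport (fun x => φ x * g (d • x) * ρ (z - c • x)) ⊆ tsupport φ := by
      refine closure_mono fun x hx => ?_
      simp only [Function.mem_support] at hx ⊢
      intro h0
      apply hx
      simp [h0]
    have hθc : HasCompactSupport (fun x => φ x * g (d • x) * ρ (z - c • x)) :=
      IsCompact.of_isClosed_subset hφc (isClosed_tsupport _) hsub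
    have := hgrad i _ (pd_contDiff j hθ) (pd_compact j hθc)
      ((pd_tsupport j _).trans (hsub.trans hφQ)) (fun ω => ψ (T z ω))
      (hψ.comp (hT.2.2.1 z).measurable) ⟨C, fun ω => hC _⟩
    linarith
  have hzz : ∀ z,
      ∫ p, Du p.1 p.2 i * pd j (fun x => φ x * g (d • x) * ρ (z - c • x)) p.1 * ψ (T z p.2) ∂P =
      ∫ p, Du p.1 p.2 j * pd i (fun x => φ x * g (d • x) * ρ (z - c • x)) p.1 * ψ (T z p.2) ∂P := by
    intro z
    rw [hz i j z, hz j i z]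
    congr 2
    ext p
    rw [pd_comm i j (by fun_prop)]
  -- expansion
  have hexp : ∀ i j : Fin N,
      ∫ z, ∫ p, Du p.1 p.2 i * pd j (fun x => φ x * g (d • x) * ρ (z - c • x)) p.1 * ψ (T z p.2) ∂P
      = d * I i φ ρ (pd j g) + I i (pd j φ) ρ g - c * I i φ (pd j ρ) g := by
    intro i j
    obtain ⟨a1, a2, a3⟩ := fubI i φ ρ (pd j g) hφ.continuous hφc hρ.continuous hρc
      (pd_contDiff j hg).continuous (pd_per j hgp)
    obtain ⟨b1, b2, b3⟩ := fubI i (pd j φ) ρ g (pd_contDiff j hφ).continuous (pd_compact j hφc)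
      hρ.continuous hρc hg.continuous hgp
    obtain ⟨c1, c2, c3⟩ := fubI i φ (pd j ρ) g hφ.continuous hφc (pd_contDiff j hρ).continuous
      (pd_compact j hρc) hg.continuous hgp
    rw [← a3, ← b3, ← c3, ← int_comb a2 b2 c2]
    congr 1
    ext z
    rw [← int_comb (a1 z) (b1 z) (c1 z)]
    congr 1
    ext p
    rw [pd_theta j hφ hg hρ]
    ring
  rw [← hexp i j, ← hexp j i]
  congr 1
  ext z
  exact hzz z

lemma ext_lip {N : ℕ} {f : (Fin N → ℝ) → ℝ} (hf : Integrable f (volume.restrict (Ycube N)))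
    (j : Fin N) : Continuous fun G : C(Ycube N, Fin N → ℝ) =>
      ∫ y : Ycube N, f y * G y j ∂(volume.comap Subtype.val) := by
  have hY : MeasurableSet (Ycube N) := measurableSet_Icc
  have hf' : Integrable (fun y : Ycube N => f y) (volume.comap Subtype.val) :=
    (integrableOn_iff_comap_subtypeVal hY).1 hf
  have hi : ∀ G : C(Ycube N, Fin N → ℝ), Integrable (fun y : Ycube N => f y * G y j)
      (volume.comap Subtype.val) := by
    intro G
    refine hf'.mul_bdd (c := ‖G‖) ?_ (Eventually.of_forall fun y => ?_)
    · exact (by fun_prop : Continuous fun y => G y j).aestronglyMeasurable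
    · exact (norm_le_pi_norm (G y) j).trans (G.norm_coe_le_norm y)
  refine (LipschitzWith.of_dist_le_mul (K := (∫ y : Ycube N, ‖f y‖ ∂(volume.comap Subtype.val)).toNNReal)
    fun G H => ?_).continuous
  rw [Real.coe_toNNReal _ (integral_nonneg fun _ => norm_nonneg _), dist_eq_norm, dist_eq_norm,
    ← integral_sub (hi G) (hi H), ← integral_mul_const]
  refine norm_integral_le_of_norm_le (hf'.norm.mul_const _) (Eventually.of_forall fun y => ?_)
  rw [← mul_sub, norm_mul]
  refine mul_le_mul_of_nonneg_left ?_ (norm_nonneg _)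
  exact (norm_le_pi_norm ((G - H) y) j).trans ((G - H).norm_coe_le_norm y)

lemma dense_family (N : ℕ) : ∃ s : ℕ → (Fin N → ℝ) → ℝ,
    (∀ n, ContDiff ℝ (⊤ : ℕ∞) (s n) ∧ ZPeriodic (s n)) ∧
    ∀ v : (Fin N → ℝ) → Fin N → ℝ,
      (∀ j, Integrable (fun y => v y j) (volume.restrict (Ycube N))) →
      (∀ n (i j : Fin N), ∫ y in Ycube N, v y i * pd j (s n) y = ∫ y in Ycube N, v y j * pd i (s n) y) →
      ∀ g : (Fin N → ℝ) → ℝ, ContDiff ℝ (⊤ : ℕ∞) g → ZPeriodic g → ∀ i j : Fin N,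
        ∫ y in Ycube N, v y i * pd j g y = ∫ y in Ycube N, v y j * pd i g y := by
  have hY : MeasurableSet (Ycube N) := measurableSet_Icc
  let 𝒢 := {g : (Fin N → ℝ) → ℝ // ContDiff ℝ (⊤ : ℕ∞) g ∧ ZPeriodic g}
  let Γ : 𝒢 → C(Ycube N, Fin N → ℝ) := fun g =>
    ⟨fun y i => pd i g.1 y, continuous_pi fun i =>
      (pd_contDiff i g.2.1).continuous.comp continuous_subtype_val⟩
  let _ : TopologicalSpace 𝒢 := TopologicalSpace.induced Γ inferInstance
  have : SecondCountableTopology 𝒢 := TopologicalSpace.secondCountableTopology_induced _ _ Γ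
  have : Nonempty 𝒢 := ⟨⟨fun _ => 0, contDiff_const, fun _ _ => rfl⟩⟩
  have hΓ : Continuous Γ := continuous_induced_dom
  refine ⟨fun n => (TopologicalSpace.denseSeq 𝒢 n).1, fun n => (TopologicalSpace.denseSeq 𝒢 n).2, ?_⟩
  intro v hi hn g hg hgp i j
  have conv : ∀ (i j : Fin N) (g : 𝒢), ∫ y in Ycube N, v y i * pd j g.1 y =
      ∫ y : Ycube N, v y i * Γ g y j ∂(volume.comap Subtype.val) := by
    intro i j g
    rw [← integral_subtype_comap hY]
    rfl
  have hcl : IsClosed {g : 𝒢 | ∫ y in Ycube N, v y i * pd j g.1 y =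
      ∫ y in Ycube N, v y j * pd i g.1 y} := by
    simp only [conv]
    exact isClosed_eq ((ext_lip (hi i) j).comp hΓ) ((ext_lip (hi j) i).comp hΓ)
  exact isClosed_property (TopologicalSpace.denseRange_denseSeq 𝒢) hcl (fun n => hn n i j) ⟨g, hg, hgp⟩

lemma lim_lem {e A B C A' B' C' : ℕ → ℝ} {a b c a' b' c' : ℝ} (hpos : ∀ k, 0 < e k)
    (he : Tendsto e atTop (nhds 0))
    (hA : Tendsto A atTop (nhds a)) (hB : Tendsto B atTop (nhds b)) (hC : Tendsto C atTop (nhds c))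
    (hA' : Tendsto A' atTop (nhds a')) (hB' : Tendsto B' atTop (nhds b'))
    (hC' : Tendsto C' atTop (nhds c'))
    (h : ∀ k, ((e k)^2)⁻¹ * A k + B k - (e k)⁻¹ * C k = ((e k)^2)⁻¹ * A' k + B' k - (e k)⁻¹ * C' k) :
    a = a' := by
  have h2 : ∀ k, A k + (e k)^2 * B k - e k * C k = A' k + (e k)^2 * B' k - e k * C' k := by
    intro k
    have hk := (hpos k).ne'
    have := congrArg (fun t => (e k)^2 * t) (h k)
    field_simp at this
    linarith
  have t1 := (hA.add ((he.pow 2).mul hB)).sub (he.mul hC)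
  have t2 := (hA'.add ((he.pow 2).mul hB')).sub (he.mul hC')
  have := tendsto_nhds_unique (t1.congr h2) t2
  simpa using this

theorem curl_ae {N : ℕ} {Ω : Type*} [MeasurableSpace Ω] (μ : Measure Ω)
    [IsProbabilityMeasure μ] (hgen : CountGenModNull μ)
    (T : (Fin N → ℝ) → Ω → Ω) (hT : IsDynSys μ T)
    (Q : Set (Fin N → ℝ)) (hQo : IsOpen Q) (hQf : IsFiniteMeasure (volume.restrict Q))
    (ε : ℕ → ℝ) (hε : ∀ k, ε k ∈ Set.Ioc (0 : ℝ) 1) (hε0 : Tendsto ε atTop (nhds 0))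
    (u : ℕ → (Fin N → ℝ) → Ω → ℝ) (Du : ℕ → (Fin N → ℝ) → Ω → Fin N → ℝ)
    (hDumeas : ∀ k, Measurable fun p : (Fin N → ℝ) × Ω => Du k p.1 p.2)
    (hgrad : ∀ (k : ℕ) (i : Fin N) (φ : (Fin N → ℝ) → ℝ),
      ContDiff ℝ (⊤ : ℕ∞) φ → HasCompactSupport φ → tsupport φ ⊆ Q →
      ∀ ψ : Ω → ℝ, Measurable ψ → (∃ C : ℝ, ∀ ω, |ψ ω| ≤ C) →
        (∫ p, u k p.1 p.2 * fderiv ℝ φ p.1 (Pi.single i 1) * ψ p.2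
            ∂((volume.restrict Q).prod μ)) =
          -(∫ p, Du k p.1 p.2 i * φ p.1 * ψ p.2 ∂((volume.restrict Q).prod μ)))
    (hDi : ∀ k i, Integrable (fun p : (Fin N → ℝ) × Ω => Du k p.1 p.2 i) ((volume.restrict Q).prod μ))
    (V : (Fin N → ℝ) → Ω → (Fin N → ℝ) → Fin N → ℝ)
    (hVmeas : Measurable fun p : ((Fin N → ℝ) × Ω) × (Fin N → ℝ) => V p.1.1 p.1.2 p.2)
    (hVi : ∀ i, Integrable (fun p : ((Fin N → ℝ) × Ω) × (Fin N → ℝ) => V p.1.1 p.1.2 p.2 i)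
      (((volume.restrict Q).prod μ).prod (volume.restrict (Ycube N))))
    (hconvD : ∀ j : Fin N, WeakStoch2Scale μ T Q ε
      (fun k x ω => Du k x ω j) (fun x ω y => V x ω y j))
    {g : (Fin N → ℝ) → ℝ} (hg : ContDiff ℝ (⊤ : ℕ∞) g) (hgp : ZPeriodic g) (i j : Fin N) :
    ∀ᵐ p ∂((volume.restrict Q).prod μ), ∫ y in Ycube N, V p.1 p.2 y i * pd j g y =
      ∫ y in Ycube N, V p.1 p.2 y j * pd i g y := by
  have hm : ∀ i j, Measurable fun p : (Fin N → ℝ) × Ω => ∫ y in Ycube N, V p.1 p.2 y i * pd j g y := by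
    intro i j
    have hpd := (pd_contDiff j hg).continuous.measurable
    have : Measurable fun q : ((Fin N → ℝ) × Ω) × (Fin N → ℝ) => V q.1.1 q.1.2 q.2 i * pd j g q.2 :=
      ((measurable_pi_apply i).comp hVmeas).mul (hpd.comp measurable_snd)
    exact this.stronglyMeasurable.integral_prod_right'.measurable
  have hint : ∀ i j, Integrable (fun p : (Fin N → ℝ) × Ω => ∫ y in Ycube N, V p.1 p.2 y i * pd j g y)
      ((volume.restrict Q).prod μ) := by
    intro i j
    obtain ⟨C, -, hC⟩ := pd_bdd j hg hgp
    have hpd := (pd_contDiff j hg).continuous.measurable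
    exact ((hVi i).mul_bdd (c := C) (hpd.comp measurable_snd).aestronglyMeasurable
      (Eventually.of_forall fun q => hC _)).integral_prod_left
  have key := prod_zero hgen hT hQo hQf
    (F := fun p => (∫ y in Ycube N, V p.1 p.2 y i * pd j g y) - ∫ y in Ycube N, V p.1 p.2 y j * pd i g y)
    ((hm i j).sub (hm j i)) ((hint i j).sub (hint j i)) ?_
  · filter_upwards [key] with p hp
    linarith
  intro φ hφ hφc hφQ ψ hψ hψb ρ hρ hρc
  have mm : ∀ {h : (Fin N → ℝ) → ℝ}, ContDiff ℝ (⊤ : ℕ∞) h → Measurable (molly T h ψ) :=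
    fun hh => molly_measurable hT hh.continuous.measurable hψ
  have mb : ∀ {h : (Fin N → ℝ) → ℝ}, ContDiff ℝ (⊤ : ℕ∞) h → HasCompactSupport h →
      ∃ C : ℝ, ∀ ω, |molly T h ψ ω| ≤ C :=
    fun hh hc => molly_bdd T (hh.continuous.integrable_of_hasCompactSupport hc) hψb
  have tA := fun i j => hconvD i φ hφ hφc hφQ (molly T ρ ψ) (mm hρ) (mb hρ hρc) (pd j g)
    (pd_contDiff j hg).continuous (pd_per j hgp)
  have tB := fun i j => hconvD i (pd j φ) (pd_contDiff j hφ) (pd_compact j hφc)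
    ((pd_tsupport j φ).trans hφQ) (molly T ρ ψ) (mm hρ) (mb hρ hρc) g
    hg.continuous hgp
  have tC := fun i j => hconvD i φ hφ hφc hφQ (molly T (pd j ρ) ψ) (mm (pd_contDiff j hρ))
    (mb (pd_contDiff j hρ) (pd_compact j hρc)) g hg.continuous hgp
  have hlim := lim_lem (fun k => (hε k).1) hε0 (tA i j) (tB i j) (tC i j) (tA j i) (tB j i) (tC j i)
    (fun k => identK hT hQf (hDumeas k) (hDi k) (hgrad k) hφ hφc hφQ hg hgp hρ hρc hψ hψb
      (ε k)⁻¹ ((ε k)^2)⁻¹ i j _ rfl)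
  obtain ⟨C1, hC1⟩ := hφc.exists_bound_of_continuous hφ.continuous
  obtain ⟨C2, hC2⟩ := mb hρ hρc
  have pint : ∀ i j, Integrable (fun p : (Fin N → ℝ) × Ω =>
      (∫ y in Ycube N, V p.1 p.2 y i * pd j g y) * φ p.1 * molly T ρ ψ p.2)
      ((volume.restrict Q).prod μ) := by
    intro i j
    exact ((hint i j).mul_bdd (c := C1) (hφ.continuous.measurable.comp measurable_fst).aestronglyMeasurable
      (Eventually.of_forall fun p => hC1 _)).mul_bdd (c := C2)
      ((mm hρ).comp measurable_snd).aestronglyMeasurable (Eventually.of_forall fun p => hC2 _)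
  have pe : ∀ i j, ∫ x in Q, ∫ ω, (∫ y in Ycube N, V x ω y i * φ x * molly T ρ ψ ω * pd j g y) ∂μ =
      ∫ p, (∫ y in Ycube N, V p.1 p.2 y i * pd j g y) * φ p.1 * molly T ρ ψ p.2
        ∂((volume.restrict Q).prod μ) := by
    intro i j
    rw [integral_prod _ (pint i j)]
    congr 1
    ext x
    congr 1
    ext ω
    simp only
    rw [← integral_mul_const, ← integral_mul_const]
    congr 1
    ext y
    ring
  rw [pe, pe] at hlim
  have hsub := integral_sub (pint i j) (pint j i)
  rw [hlim, sub_self] at hsub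
  have hpr := integral_prod _ ((pint i j).sub (pint j i))
  refine Eq.trans ?_ (hpr.symm.trans hsub)
  congr 1
  ext x
  congr 1
  ext ω
  simp only [Pi.sub_apply]
  ring

/-- existence of the periodic corrector `u₂`. -/
theorem stmt13 {N : ℕ} (hN : 1 ≤ N) {Ω : Type*} [MeasurableSpace Ω] (μ : Measure Ω)
    [IsProbabilityMeasure μ] (hgen : CountGenModNull μ)
    (Φ : ℝ → ℝ) (hΦ : IsYoung Φ) (hΦ2 : Delta2 Φ) (hΦc2 : Delta2 (conjY Φ))
    (T : (Fin N → ℝ) → Ω → Ω) (hT : IsDynSys μ T)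
    (Q : Set (Fin N → ℝ)) (hQo : IsOpen Q) (hQb : Bornology.IsBounded Q)
    (ε : ℕ → ℝ) (hε : ∀ k, ε k ∈ Set.Ioc (0 : ℝ) 1) (hε0 : Tendsto ε atTop (nhds 0))
    (u : ℕ → (Fin N → ℝ) → Ω → ℝ) (Du : ℕ → (Fin N → ℝ) → Ω → Fin N → ℝ)
    (humeas : ∀ k, Measurable fun p : (Fin N → ℝ) × Ω => u k p.1 p.2)
    (hubd : (⨆ k, luxNorm Φ ((volume.restrict Q).prod μ) fun p => u k p.1 p.2) < ⊤)
    (u₀ : (Fin N → ℝ) → Ω → (Fin N → ℝ) → ℝ)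
    (hu₀meas : Measurable fun p : ((Fin N → ℝ) × Ω) × (Fin N → ℝ) => u₀ p.1.1 p.1.2 p.2)
    (hu₀per : ∀ x ω, ZPeriodic (u₀ x ω))
    (hu₀bd : luxNorm Φ (((volume.restrict Q).prod μ).prod (volume.restrict (Ycube N)))
      (fun p => u₀ p.1.1 p.1.2 p.2) < ⊤)
    (hconv : WeakStoch2Scale μ T Q ε u u₀)
    (hDumeas : ∀ k, Measurable fun p : (Fin N → ℝ) × Ω => Du k p.1 p.2)
    (hgrad : ∀ (k : ℕ) (i : Fin N) (φ : (Fin N → ℝ) → ℝ),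
      ContDiff ℝ (⊤ : ℕ∞) φ → HasCompactSupport φ → tsupport φ ⊆ Q →
      ∀ ψ : Ω → ℝ, Measurable ψ → (∃ C : ℝ, ∀ ω, |ψ ω| ≤ C) →
        (∫ p, u k p.1 p.2 * fderiv ℝ φ p.1 (Pi.single i 1) * ψ p.2
            ∂((volume.restrict Q).prod μ)) =
          -(∫ p, Du k p.1 p.2 i * φ p.1 * ψ p.2 ∂((volume.restrict Q).prod μ)))
    (hDubd : (⨆ k, luxNorm Φ ((volume.restrict Q).prod μ)
      fun p => enorm2 (Du k p.1 p.2)) < ⊤)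
    (V : (Fin N → ℝ) → Ω → (Fin N → ℝ) → Fin N → ℝ)
    (hVmeas : Measurable fun p : ((Fin N → ℝ) × Ω) × (Fin N → ℝ) => V p.1.1 p.1.2 p.2)
    (hVper : ∀ (x : Fin N → ℝ) (ω : Ω) (y : Fin N → ℝ) (k : Fin N → ℤ),
      V x ω (y + fun i => (k i : ℝ)) = V x ω y)
    (hVbd : luxNorm Φ (((volume.restrict Q).prod μ).prod (volume.restrict (Ycube N)))
      (fun p => enorm2 (V p.1.1 p.1.2 p.2)) < ⊤)
    (hconvD : ∀ j : Fin N, WeakStoch2Scale μ T Q ε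
      (fun k x ω => Du k x ω j) (fun x ω y => V x ω y j)) :
    ∃ u₂ : (Fin N → ℝ) → Ω → (Fin N → ℝ) → ℝ,
      (Measurable fun p : ((Fin N → ℝ) × Ω) × (Fin N → ℝ) => u₂ p.1.1 p.1.2 p.2) ∧
      (∀ x ω, ZPeriodic (u₂ x ω)) ∧
      luxNorm Φ (((volume.restrict Q).prod μ).prod (volume.restrict (Ycube N)))
        (fun p => u₂ p.1.1 p.1.2 p.2) < ⊤ ∧
      (∀ᵐ p ∂((volume.restrict Q).prod μ), (∫ y in Ycube N, u₂ p.1 p.2 y) = 0) ∧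
      (∀ᵐ p ∂((volume.restrict Q).prod μ),
        ∀ g : (Fin N → ℝ) → ℝ, ContDiff ℝ (⊤ : ℕ∞) g → ZPeriodic g →
          ∀ i : Fin N,
            (∫ y in Ycube N, u₂ p.1 p.2 y * fderiv ℝ g y (Pi.single i 1)) =
              -(∫ y in Ycube N,
                (V p.1 p.2 y i - ∫ z in Ycube N, V p.1 p.2 z i) * g y)) := by
  have hQf : IsFiniteMeasure (volume.restrict Q) := by
    refine ⟨?_⟩
    rw [Measure.restrict_apply_univ]
    exact hQb.measure_lt_top
  have hVi : ∀ i, Integrable (fun p : ((Fin N → ℝ) × Ω) × (Fin N → ℝ) => V p.1.1 p.1.2 p.2 i)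
      (((volume.restrict Q).prod μ).prod (volume.restrict (Ycube N))) :=
    fun i => lux_comp_integrable hΦ hVmeas hVbd i
  have hDi : ∀ k i, Integrable (fun p : (Fin N → ℝ) × Ω => Du k p.1 p.2 i)
      ((volume.restrict Q).prod μ) := fun k i => lux_comp_integrable hΦ (hDumeas k)
    (lt_of_le_of_lt (le_iSup (fun k => luxNorm Φ ((volume.restrict Q).prod μ)
      fun p => enorm2 (Du k p.1 p.2)) k) hDubd) i
  have hVs : ∀ᵐ p ∂((volume.restrict Q).prod μ), ∀ j,
      Integrable (fun y => V p.1 p.2 y j) (volume.restrict (Ycube N)) :=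
    ae_all_iff.2 fun j => (hVi j).prod_right_ae
  have hVm : ∀ x ω, Measurable (V x ω) := fun x ω =>
    hVmeas.comp (f := fun y : Fin N → ℝ => ((x, ω), y)) (by fun_prop)
  have hVp : ∀ x ω j, ZPeriodic fun y => V x ω y j := fun x ω j y k => by
    simp only
    rw [hVper]
  obtain ⟨s, hs, hdense⟩ := dense_family N
  have hcurl : ∀ᵐ p ∂((volume.restrict Q).prod μ), ∀ n (i j : Fin N),
      ∫ y in Ycube N, V p.1 p.2 y i * pd j (s n) y = ∫ y in Ycube N, V p.1 p.2 y j * pd i (s n) y :=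
    ae_all_iff.2 fun n => ae_all_iff.2 fun i => ae_all_iff.2 fun j =>
      curl_ae μ hgen T hT Q hQo hQf ε hε hε0 u Du hDumeas hgrad hDi V hVmeas hVi hconvD
        (hs n).1 (hs n).2 i j
  refine ⟨fun x ω => corr (V x ω), ?_, fun x ω => corr_per (hVp x ω), ?_, ?_, ?_⟩
  · exact corr_measurable (V := fun p : (Fin N → ℝ) × Ω => V p.1 p.2) hVmeas
  · exact corr_lux hN hΦ (V := fun p : (Fin N → ℝ) × Ω => V p.1 p.2) hVmeas
      (fun p y k => hVper p.1 p.2 y k) hVbd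
  · filter_upwards [hVs] with p hp
    exact corr_mean (hVm _ _) (hVp _ _) hp
  · filter_upwards [hVs, hcurl] with p hp hc g hg hgp i
    exact corr_grad (hVm _ _) (hVp _ _) hp (hdense _ hp hc) g hg hgp i
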